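/- arXiv:1302.2224 — 13 statements merged into one kernel-verified Lean document; each statement's English description precedes it below -/
import Mathlib

section
/- If u : (0,1) → ℝ is Lebesgue integrable, then Tu is Lebesgue integrable on (0,1) × (−1/2, 1/2) and ∫∫_{(0,1)×(−1/2,1/2)} (Tu)(x,y) dx dy = ∫₀¹ u(x) dx. (Integral Rule: κ⁰ ∫_Ω u dx = κ¹ ∫_{Ω×Ω¹} Tu dx dy, where here κ⁰ = 1/|Ω| = 1 and κ¹ = 1/|Ω×Ω¹| = 1.) -/
open Set MeasureTheory

/-- Two-scale transform: `(Tu)(x,y) = u(ε(⌊x/ε⌋ + 1/2) + εy)` with `ε = 1/N`. -/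
noncomputable def twoScale (N : ℕ) (u : ℝ → ℝ) (x y : ℝ) : ℝ :=
  u ((1 / (N : ℝ)) * ((⌊x / (1 / (N : ℝ))⌋ : ℝ) + 1 / 2) + (1 / (N : ℝ)) * y)

lemma cell_mem_iff (N : ℕ) (hN : 0 < N) (c : ℕ) (x : ℝ) :
    x ∈ Ico ((c : ℝ) / N) ((c + 1 : ℝ) / N) ↔ ⌊x / (1 / (N : ℝ))⌋ = (c : ℤ) := by
  have hN' : (0 : ℝ) < N := by exact_mod_cast hN
  rw [Int.floor_eq_iff, mem_Ico, div_le_iff₀ hN', lt_div_iff₀ hN', div_div_eq_mul_div, div_one]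
  simp

lemma cells_union (N : ℕ) (hN : 0 < N) :
    (⋃ c : Fin N, Ico (((c : ℕ) : ℝ) / N) ((((c : ℕ) : ℝ) + 1) / N)) = Ico (0 : ℝ) 1 := by
  have hN' : (0 : ℝ) < N := by exact_mod_cast hN
  ext x
  simp only [mem_iUnion]
  constructor
  · rintro ⟨c, h1, h2⟩
    have hc : ((c : ℕ) : ℝ) + 1 ≤ N := by exact_mod_cast c.2
    constructor
    · exact le_trans (by positivity) h1
    · exact lt_of_lt_of_le h2 ((div_le_one hN').2 hc)
  · rintro ⟨h0, h1⟩
    have hx : 0 ≤ x * N := by positivity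
    have hlt : ⌊x * N⌋₊ < N := by
      rw [Nat.floor_lt hx]
      nlinarith
    refine ⟨⟨⌊x * N⌋₊, hlt⟩, ?_, ?_⟩
    · rw [div_le_iff₀ hN']
      exact Nat.floor_le hx
    · rw [lt_div_iff₀ hN']
      exact Nat.lt_floor_add_one _

lemma cells_disjoint (N : ℕ) (hN : 0 < N) :
    Pairwise (Function.onFun Disjoint
      (fun c : Fin N => Ico (((c : ℕ) : ℝ) / N) ((((c : ℕ) : ℝ) + 1) / N))) := by
  intro c d hcd
  refine Set.disjoint_left.2 fun x hx hy => hcd ?_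
  rw [cell_mem_iff N hN] at hx hy
  rw [hx] at hy
  exact Fin.ext (by exact_mod_cast hy)

lemma slice_volume (N : ℕ) (hN : 0 < N) (c : ℕ) (A : Set ℝ) :
    volume (((fun y : ℝ => (1 / (N : ℝ)) * ((c : ℝ) + 1 / 2) + (1 / (N : ℝ)) * y) ⁻¹' A) ∩
      Ico (-(1 / 2) : ℝ) (1 / 2)) =
    ENNReal.ofReal N * volume (A ∩ Ico ((c : ℝ) / N) ((c + 1 : ℝ) / N)) := by
  have hN' : (0 : ℝ) < N := by exact_mod_cast hN
  have h1 : ((fun y : ℝ => (1 / (N : ℝ)) * ((c : ℝ) + 1 / 2) + (1 / (N : ℝ)) * y) ⁻¹' A) ∩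
      Ico (-(1 / 2) : ℝ) (1 / 2) = (fun y => (1 / (N : ℝ)) * y) ⁻¹'
        ((fun z => (1 / (N : ℝ)) * ((c : ℝ) + 1 / 2) + z) ⁻¹'
          (A ∩ Ico ((c : ℝ) / N) ((c + 1 : ℝ) / N))) := by
    ext y
    simp only [mem_inter_iff, mem_preimage, mem_Ico, and_congr_right_iff]
    intro _
    rw [div_le_iff₀ hN', lt_div_iff₀ hN']
    have : (1 / (N : ℝ) * ((c : ℝ) + 1 / 2) + 1 / (N : ℝ) * y) * N = c + 1 / 2 + y := by
      field_simp
    rw [this]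
    constructor <;> rintro ⟨_, _⟩ <;> constructor <;> linarith
  rw [h1, Real.volume_preimage_mul_left (by positivity), measure_preimage_add]
  congr 2
  rw [one_div, inv_inv, abs_of_pos hN']

lemma phi_mp (N : ℕ) (hN : 0 < N) :
    MeasurePreserving (fun p : ℝ × ℝ =>
      (1 / (N : ℝ)) * ((⌊p.1 / (1 / (N : ℝ))⌋ : ℝ) + 1 / 2) + (1 / (N : ℝ)) * p.2)
      (volume.restrict (Ioo (0 : ℝ) 1 ×ˢ Ioo (-(1 / 2) : ℝ) (1 / 2)))
      (volume.restrict (Ioo (0 : ℝ) 1)) := by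
  have hN' : (0 : ℝ) < N := by exact_mod_cast hN
  have hm : Measurable (fun p : ℝ × ℝ =>
      (1 / (N : ℝ)) * ((⌊p.1 / (1 / (N : ℝ))⌋ : ℝ) + 1 / 2) + (1 / (N : ℝ)) * p.2) := by
    have : Measurable (fun p : ℝ × ℝ => (⌊p.1 / (1 / (N : ℝ))⌋ : ℝ)) :=
      measurable_from_top.comp (Int.measurable_floor.comp (measurable_fst.div_const _))
    fun_prop
  refine ⟨hm, ?_⟩
  rw [Measure.volume_eq_prod, ← Measure.prod_restrict, restrict_Ioo_eq_restrict_Ico,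
    restrict_Ioo_eq_restrict_Ico]
  ext A hA
  rw [Measure.map_apply hm hA, Measure.prod_apply (hm hA), Measure.restrict_apply hA,
    ← cells_union N hN, lintegral_iUnion (fun _ => measurableSet_Ico) (cells_disjoint N hN),
    inter_iUnion, measure_iUnion]
  · congr 1
    ext c
    have : ∀ x ∈ Ico (((c : ℕ) : ℝ) / N) ((((c : ℕ) : ℝ) + 1) / N),
        (volume.restrict (Ico (-(1 / 2) : ℝ) (1 / 2))) (Prod.mk x ⁻¹' ((fun p : ℝ × ℝ =>
      (1 / (N : ℝ)) * ((⌊p.1 / (1 / (N : ℝ))⌋ : ℝ) + 1 / 2) + (1 / (N : ℝ)) * p.2) ⁻¹' A)) =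
        ENNReal.ofReal N *
          volume (A ∩ Ico (((c : ℕ) : ℝ) / N) ((((c : ℕ) : ℝ) + 1) / N)) := by
      intro x hx
      rw [cell_mem_iff N hN] at hx
      rw [Measure.restrict_apply (measurable_prodMk_left (hm hA)), ← slice_volume N hN,
        ← preimage_comp]
      simp only [Function.comp_def, hx, Int.cast_natCast]
    rw [setLIntegral_congr_fun measurableSet_Ico this, setLIntegral_const, Real.volume_Ico,
      mul_right_comm, ← ENNReal.ofReal_mul hN'.le]
    have : (N : ℝ) * ((((c : ℕ) : ℝ) + 1) / N - ((c : ℕ) : ℝ) / N) = 1 := by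
      field_simp
      ring
    rw [this]
    simp
  · intro c d hcd
    exact (cells_disjoint N hN hcd).mono inter_subset_right inter_subset_right
  · intro c
    exact hA.inter measurableSet_Ico

/-- **Integral Rule.** If `u` is Lebesgue integrable on `(0,1)`, then `Tu` is
integrable on `(0,1) × (-1/2, 1/2)` and the two integrals coincide. -/
theorem two_scale_integral_rule (N : ℕ) (hN : 0 < N) (u : ℝ → ℝ)
    (hu : IntegrableOn u (Ioo (0 : ℝ) 1)) :
    IntegrableOn (fun p : ℝ × ℝ => twoScale N u p.1 p.2)
        (Ioo (0 : ℝ) 1 ×ˢ Ioo (-(1 / 2) : ℝ) (1 / 2)) ∧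
    ∫ p in Ioo (0 : ℝ) 1 ×ˢ Ioo (-(1 / 2) : ℝ) (1 / 2),
        twoScale N u p.1 p.2 = ∫ x in Ioo (0 : ℝ) 1, u x := by
  have h := phi_mp N hN
  refine ⟨(h.integrable_comp hu.aestronglyMeasurable).2 hu, ?_⟩
  rw [← h.map_eq, integral_map h.aemeasurable (by rw [h.map_eq]; exact hu.aestronglyMeasurable)]
  rfl
end

section
/- For every u ∈ L²(0,1) and every v ∈ L²((0,1) × (−1/2, 1/2)), ∫₀¹ (T*v)(x) u(x) dx = ∫∫_{(0,1)×(−1/2,1/2)} v(x,y) (Tu)(x,y) dx dy. In other words, the explicitly defined piecewise-averaging operator T* is the adjoint of the two-scale transform T. -/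
open Set MeasureTheory

/-- Adjoint two-scale transform:
`(T*v)(x) = (1/ε) ∫_{ε⌊x/ε⌋}^{ε(⌊x/ε⌋+1)} v(s, x/ε − ⌊x/ε⌋ − 1/2) ds`, `ε = 1/N`. -/
noncomputable def twoScaleAdj (N : ℕ) (v : ℝ → ℝ → ℝ) (x : ℝ) : ℝ :=
  (1 / (1 / (N : ℝ))) *
    ∫ s in ((1 / (N : ℝ)) * (⌊x / (1 / (N : ℝ))⌋ : ℝ))..((1 / (N : ℝ)) * ((⌊x / (1 / (N : ℝ))⌋ : ℝ) + 1)),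
      v s (x / (1 / (N : ℝ)) - (⌊x / (1 / (N : ℝ))⌋ : ℝ) - 1 / 2)

lemma ts_floor (e : ℝ) (he : 0 < e) (c : ℕ) (x : ℝ) (hx : x ∈ Ico (e * c) (e * (c + 1))) :
    ⌊x / e⌋ = (c : ℤ) := by
  rw [Int.floor_eq_iff]
  constructor
  · rw [le_div_iff₀ he]; push_cast; linarith [hx.1]
  · rw [div_lt_iff₀ he]; push_cast; linarith [hx.2]

lemma ts_emb (e : ℝ) (he : 0 < e) (b : ℝ) : MeasurableEmbedding (fun y : ℝ => b + e * y) :=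
  (measurableEmbedding_addLeft b).comp (measurableEmbedding_mulLeft₀ he.ne')

lemma ts_map (e : ℝ) (he : 0 < e) (c : ℕ) :
    Measure.map (fun y : ℝ => e * ((c : ℝ) + 1 / 2) + e * y)
      (volume.restrict (Ico (-(1 / 2) : ℝ) (1 / 2)))
      = ENNReal.ofReal (e⁻¹) • volume.restrict (Ico (e * c) (e * (c + 1))) := by
  have h1 : Measure.map (fun y : ℝ => e * ((c : ℝ) + 1 / 2) + e * y) volume
      = ENNReal.ofReal (e⁻¹) • volume := by
    have : (fun y : ℝ => e * ((c : ℝ) + 1 / 2) + e * y)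
      = (fun z => e * ((c : ℝ) + 1 / 2) + z) ∘ (fun y => e * y) := rfl
    rw [this, ← Measure.map_map (by fun_prop) (by fun_prop), Real.map_volume_mul_left he.ne',
      Measure.map_smul, map_add_left_eq_self, abs_of_pos (inv_pos.2 he)]
  rw [← Measure.restrict_smul, ← h1, (ts_emb e he _).restrict_map]
  congr 2
  ext y
  simp only [mem_Ico, mem_preimage]
  constructor
  · rintro ⟨h, h'⟩; constructor <;> nlinarith
  · rintro ⟨h, h'⟩; constructor
    · by_contra hh; nlinarith
    · by_contra hh; nlinarith

lemma ts_cell (N : ℕ) (hN : 0 < N) (u : ℝ → ℝ) (v : ℝ → ℝ → ℝ) (c : ℕ)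
    (hu : MemLp u 2 (volume.restrict (Ico ((1 / (N : ℝ)) * c) ((1 / (N : ℝ)) * (c + 1)))))
    (hv : MemLp (fun p : ℝ × ℝ => v p.1 p.2) 2
      ((volume.restrict (Ico ((1 / (N : ℝ)) * c) ((1 / (N : ℝ)) * (c + 1)))).prod
        (volume.restrict (Ico (-(1 / 2) : ℝ) (1 / 2))))) :
    Integrable (fun x => twoScaleAdj N v x * u x)
      (volume.restrict (Ico ((1 / (N : ℝ)) * c) ((1 / (N : ℝ)) * (c + 1)))) ∧
    Integrable (fun p : ℝ × ℝ => v p.1 p.2 * twoScale N u p.1 p.2)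
      ((volume.restrict (Ico ((1 / (N : ℝ)) * c) ((1 / (N : ℝ)) * (c + 1)))).prod
        (volume.restrict (Ico (-(1 / 2) : ℝ) (1 / 2)))) ∧
    ∫ x, twoScaleAdj N v x * u x
      ∂(volume.restrict (Ico ((1 / (N : ℝ)) * c) ((1 / (N : ℝ)) * (c + 1)))) =
    ∫ p : ℝ × ℝ, v p.1 p.2 * twoScale N u p.1 p.2
      ∂((volume.restrict (Ico ((1 / (N : ℝ)) * c) ((1 / (N : ℝ)) * (c + 1)))).prod
        (volume.restrict (Ico (-(1 / 2) : ℝ) (1 / 2)))) := by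
  unfold twoScale twoScaleAdj
  have he : 0 < 1 / (N : ℝ) := by positivity
  generalize 1 / (N : ℝ) = e at *
  set μ := volume.restrict (Ico (e * (c : ℝ)) (e * (c + 1))) with hμ
  set ν := volume.restrict (Ico (-(1 / 2) : ℝ) (1 / 2)) with hν
  set g : ℝ → ℝ := fun y => e * ((c : ℝ) + 1 / 2) + e * y with hg
  have hge : MeasurableEmbedding g := ts_emb e he _
  have hmap : Measure.map g ν = ENNReal.ofReal (e⁻¹) • μ := ts_map e he c
  have hug : MemLp (fun y => u (g y)) 2 ν := by
    have : MemLp u 2 (Measure.map g ν) := by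
      rw [hmap]; exact hu.smul_measure ENNReal.ofReal_ne_top
    exact (hge.memLp_map_measure_iff).1 this
  have hug2 : MemLp (fun p : ℝ × ℝ => u (g p.2)) 2 (μ.prod ν) := hug.comp_snd μ
  have hF : Integrable (fun p : ℝ × ℝ => v p.1 p.2 * u (g p.2)) (μ.prod ν) :=
    hv.integrable_mul hug2
  have hR : (fun p : ℝ × ℝ => v p.1 p.2 * u (e * ((⌊p.1 / e⌋ : ℝ) + 1 / 2) + e * p.2))
      =ᵐ[μ.prod ν] (fun p : ℝ × ℝ => v p.1 p.2 * u (g p.2)) := by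
    rw [hμ, hν, Measure.prod_restrict]
    filter_upwards [ae_restrict_mem (measurableSet_Ico.prod measurableSet_Ico)] with p hp
    rw [ts_floor e he c p.1 hp.1]
    simp [hg]
  have hL : (fun x => (1 / e * ∫ s in (e * (⌊x / e⌋ : ℝ))..(e * ((⌊x / e⌋ : ℝ) + 1)),
      v s (x / e - (⌊x / e⌋ : ℝ) - 1 / 2)) * u x)
      =ᵐ[μ] (fun x => (1 / e) * ((∫ s, v s (x / e - (c : ℝ) - 1 / 2) ∂μ) * u x)) := by
    rw [hμ]
    filter_upwards [ae_restrict_mem measurableSet_Ico] with x hx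
    rw [ts_floor e he c x hx, Int.cast_natCast, intervalIntegral.integral_of_le (by nlinarith),
      integral_Ico_eq_integral_Ioc, mul_assoc]
  have hG : (fun y => (∫ s, v s (g y / e - (c : ℝ) - 1 / 2) ∂μ) * u (g y))
      = fun y => ∫ s, v s y * u (g y) ∂μ := by
    ext y
    rw [integral_mul_const]
    have : g y / e - (c : ℝ) - 1 / 2 = y := by simp only [hg]; field_simp; ring
    rw [this]
  have hGi : Integrable (fun y => ∫ s, v s y * u (g y) ∂μ) ν := hF.integral_prod_right
  have hHi : Integrable (fun x => (∫ s, v s (x / e - (c : ℝ) - 1 / 2) ∂μ) * u x)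
      (Measure.map g ν) := by
    rw [hge.integrable_map_iff]
    exact (congrArg (fun f => Integrable f ν) hG).mpr hGi
  have hHi' := hHi
  rw [hmap, integrable_smul_measure (by simpa using he) ENNReal.ofReal_ne_top] at hHi'
  refine ⟨(integrable_congr hL).2 (hHi'.const_mul _), (integrable_congr hR).2 hF, ?_⟩
  rw [integral_congr_ae hL, integral_congr_ae hR, integral_prod_symm _ hF, ← hG,
    ← hge.integral_map (μ := ν) (fun x => (∫ s, v s (x / e - (c : ℝ) - 1 / 2) ∂μ) * u x), hmap,
    integral_smul_measure, integral_const_mul, ENNReal.toReal_ofReal (by positivity)]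
  simp

lemma ts_union (N : ℕ) (hN : 0 < N) :
    Ico (0 : ℝ) 1 = ⋃ c ∈ Finset.range N, Ico ((1 / (N : ℝ)) * c) ((1 / (N : ℝ)) * (c + 1)) := by
  have hN' : (0 : ℝ) < N := by positivity
  have he : 0 < 1 / (N : ℝ) := by positivity
  have hone : 1 / (N : ℝ) * N = 1 := by field_simp
  ext x
  simp only [mem_iUnion, Finset.mem_range, exists_prop]
  constructor
  · rintro ⟨h0, h1⟩
    refine ⟨⌊x * N⌋₊, ?_, ?_, ?_⟩
    · rw [Nat.floor_lt (by positivity)]; nlinarith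
    · have := Nat.floor_le (a := x * N) (by positivity)
      rw [one_div_mul_eq_div, div_le_iff₀ hN']; exact this
    · have := Nat.lt_floor_add_one (x * N)
      rw [one_div_mul_eq_div, lt_div_iff₀ hN']; exact this
  · rintro ⟨c, hc, h1, h2⟩
    have hc' : (c : ℝ) + 1 ≤ N := by exact_mod_cast hc
    constructor
    · exact le_trans (by positivity) h1
    · nlinarith

lemma ts_disj (N : ℕ) (hN : 0 < N) :
    Pairwise (Function.onFun Disjoint
      (fun c : ℕ => Ico ((1 / (N : ℝ)) * c) ((1 / (N : ℝ)) * (c + 1)))) := by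
  intro a b hab
  rw [Function.onFun, Set.disjoint_left]
  intro x ha hb
  have he : 0 < 1 / (N : ℝ) := by positivity
  have h1 := ts_floor _ he a x ha
  have h2 := ts_floor _ he b x hb
  exact hab (by exact_mod_cast h1.symm.trans h2)

/-- **T\* is the adjoint of T.** For every `u ∈ L²(0,1)` and
`v ∈ L²((0,1) × (-1/2,1/2))`, `∫ (T*v) u = ∫∫ v (Tu)`. -/
theorem two_scale_adjoint_rule (N : ℕ) (hN : 0 < N) (u : ℝ → ℝ) (v : ℝ → ℝ → ℝ)
    (hu : MemLp u 2 (volume.restrict (Ioo (0 : ℝ) 1)))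
    (hv : MemLp (fun p : ℝ × ℝ => v p.1 p.2) 2
      (volume.restrict (Ioo (0 : ℝ) 1 ×ˢ Ioo (-(1 / 2) : ℝ) (1 / 2)))) :
    ∫ x in Ioo (0 : ℝ) 1, twoScaleAdj N v x * u x
      = ∫ p in Ioo (0 : ℝ) 1 ×ˢ Ioo (-(1 / 2) : ℝ) (1 / 2),
          v p.1 p.2 * twoScale N u p.1 p.2 := by
  rw [Measure.restrict_congr_set (Ioo_ae_eq_Ico (μ := volume) (a := (0:ℝ)) (b := 1))] at hu ⊢
  have hprod : (volume : Measure (ℝ × ℝ)).restrict (Ioo (0 : ℝ) 1 ×ˢ Ioo (-(1 / 2) : ℝ) (1 / 2))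
      = volume.restrict (Ico (0 : ℝ) 1 ×ˢ Ico (-(1 / 2) : ℝ) (1 / 2)) := by
    rw [Measure.volume_eq_prod, ← Measure.prod_restrict, ← Measure.prod_restrict,
      Measure.restrict_congr_set Ioo_ae_eq_Ico, Measure.restrict_congr_set Ioo_ae_eq_Ico]
  rw [hprod] at hv ⊢
  have hcell : ∀ c ∈ Finset.range N, _ := fun c hc => by
    have hsub : Ico ((1 / (N : ℝ)) * c) ((1 / (N : ℝ)) * (c + 1)) ⊆ Ico (0 : ℝ) 1 := by
      rw [ts_union N hN]
      exact subset_biUnion_of_mem (s := (Finset.range N : Set ℕ))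
        (u := fun c : ℕ => Ico ((1 / (N : ℝ)) * c) ((1 / (N : ℝ)) * (c + 1))) (by simpa using hc)
    have h := ts_cell N hN u v c (hu.mono_measure (Measure.restrict_mono hsub le_rfl)) (by
      rw [Measure.prod_restrict, ← Measure.volume_eq_prod]
      exact hv.mono_measure (Measure.restrict_mono (prod_mono hsub le_rfl) le_rfl))
    rw [Measure.prod_restrict, ← Measure.volume_eq_prod] at h
    exact h
  have hU : Ico (0 : ℝ) 1 ×ˢ Ico (-(1 / 2) : ℝ) (1 / 2) = ⋃ c ∈ Finset.range N,
      Ico ((1 / (N : ℝ)) * c) ((1 / (N : ℝ)) * (c + 1)) ×ˢ Ico (-(1 / 2) : ℝ) (1 / 2) := by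
    rw [ts_union N hN]
    simp only [iUnion_prod_const]
  have hd := ts_disj N hN
  rw [hU, integral_biUnion_finset, ts_union N hN, integral_biUnion_finset]
  · exact Finset.sum_congr rfl fun c hc => (hcell c hc).2.2
  · exact fun c _ => measurableSet_Ico
  · exact fun a _ b _ hab => hd hab
  · exact fun c hc => (hcell c hc).1
  · exact fun c _ => measurableSet_Ico.prod measurableSet_Ico
  · exact fun a _ b _ hab => (hd hab).set_prod_left _ _
  · exact fun c hc => (hcell c hc).2.1
end

section
/- Let v : ℝ × ℝ → ℝ be infinitely differentiable, 1-periodic in its second argument, and suppose that for every j ≥ 0, every x♯ ∈ {0, 1} and every y ∈ ℝ one has (∂^j v/∂x♯^j)(x♯, y) = 0 (i.e. v and all its derivatives in the first variable vanish on the boundary of (0,1)). Then the function Bv : x ↦ v(x, x/ε − 1/2) is infinitely differentiable on ℝ and every derivative of Bv vanishes at x = 0 and at x = 1. (Boundary Conditions of Bv: if v ∈ C₀^∞(Ω♯; C^∞(Ω¹)) then Bv ∈ C₀^∞(Ω).) -/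
open Set

/-- `Bv : x ↦ v(x, x/ε − 1/2)` with `ε = 1/N`. -/
noncomputable def smoothAdj (N : ℕ) (v : ℝ → ℝ → ℝ) (x : ℝ) : ℝ :=
  v x (x / (1 / (N : ℝ)) - 1 / 2)

noncomputable def dirD (c : ℝ) (f : ℝ × ℝ → ℝ) (p : ℝ × ℝ) : ℝ := fderiv ℝ f p (1, c)

theorem dirD_smooth (c : ℝ) {f : ℝ × ℝ → ℝ} (hf : ContDiff ℝ (⊤ : ℕ∞) f) :
    ContDiff ℝ (⊤ : ℕ∞) (dirD c f) := by
  have h : ContDiff ℝ (⊤ : ℕ∞) (fderiv ℝ f) := hf.fderiv_right (by simp)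
  exact h.clm_apply contDiff_const

theorem dirD_dirD (a b : ℝ) {f : ℝ × ℝ → ℝ} (hf : ContDiff ℝ (⊤ : ℕ∞) f) (p : ℝ × ℝ) :
    dirD a (dirD b f) p = fderiv ℝ (fderiv ℝ f) p (1, a) (1, b) := by
  have h : ContDiff ℝ (⊤ : ℕ∞) (fderiv ℝ f) := hf.fderiv_right (by simp)
  have h' : DifferentiableAt ℝ (fderiv ℝ f) p := (h.differentiable (by simp)) p
  have h2 := h'.hasFDerivAt.clm_apply (hasFDerivAt_const ((1, b) : ℝ × ℝ) p)
  have h3 : fderiv ℝ (dirD b f) p = _ := h2.fderiv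
  unfold dirD at h3 ⊢
  rw [h3]
  simp

theorem dirD_comm (a b : ℝ) {f : ℝ × ℝ → ℝ} (hf : ContDiff ℝ (⊤ : ℕ∞) f) :
    dirD a (dirD b f) = dirD b (dirD a f) := by
  funext p
  rw [dirD_dirD a b hf, dirD_dirD b a hf]
  have : IsSymmSndFDerivAt ℝ f p := by
    apply (hf.contDiffAt).isSymmSndFDerivAt
    simp only [minSmoothness_of_isRCLikeNormedField]
    exact WithTop.coe_le_coe.2 (le_top : (2 : ℕ∞) ≤ ⊤)
  exact this _ _

theorem dirD_iter_smooth (c : ℝ) (j : ℕ) : ∀ {f : ℝ × ℝ → ℝ}, ContDiff ℝ (⊤ : ℕ∞) f →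
    ContDiff ℝ (⊤ : ℕ∞) ((dirD c)^[j] f) := by
  induction j with
  | zero => intro f hf; exact hf
  | succ j ih => intro f hf; exact ih (dirD_smooth c hf)

theorem dirD_iter_comm (a b : ℝ) (j : ℕ) : ∀ {f : ℝ × ℝ → ℝ}, ContDiff ℝ (⊤ : ℕ∞) f →
    (dirD a)^[j] (dirD b f) = dirD b ((dirD a)^[j] f) := by
  induction j with
  | zero => intro f hf; rfl
  | succ j ih =>
    intro f hf
    rw [Function.iterate_succ_apply, Function.iterate_succ_apply, dirD_comm a b hf,
      ih (dirD_smooth a hf)]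

theorem deriv_line (c d : ℝ) {f : ℝ × ℝ → ℝ} (hf : ContDiff ℝ (⊤ : ℕ∞) f) (x : ℝ) :
    deriv (fun x => f (x, c * x + d)) x = dirD c f (x, c * x + d) := by
  have h1 : HasDerivAt (fun x : ℝ => (x, c * x + d)) ((1 : ℝ), c) x := by
    apply (hasDerivAt_id x).prodMk
    simpa using ((hasDerivAt_id x).const_mul c).add_const d
  have h2 : DifferentiableAt ℝ f (x, c * x + d) := (hf.differentiable (by simp)) _
  exact (h2.hasFDerivAt.comp_hasDerivAt x h1).deriv

theorem iteratedDeriv_line (c d : ℝ) (j : ℕ) : ∀ {f : ℝ × ℝ → ℝ}, ContDiff ℝ (⊤ : ℕ∞) f →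
    iteratedDeriv j (fun x => f (x, c * x + d)) = fun x => (dirD c)^[j] f (x, c * x + d) := by
  induction j with
  | zero => intro f hf; simp
  | succ j ih =>
    intro f hf
    rw [iteratedDeriv_succ', funext (deriv_line c d hf), ih (dirD_smooth c hf)]
    rfl

theorem dirD_flat (c x0 : ℝ) {f : ℝ × ℝ → ℝ} (hf : ContDiff ℝ (⊤ : ℕ∞) f)
    (h : ∀ j : ℕ, ∀ y, (dirD 0)^[j] f (x0, y) = 0) (j : ℕ) (y : ℝ) :
    (dirD 0)^[j] (dirD c f) (x0, y) = 0 := by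
  rw [dirD_iter_comm 0 c j hf]
  have hs := dirD_iter_smooth 0 j hf
  have hj := h (j + 1) y
  rw [Function.iterate_succ_apply'] at hj
  have h0 := h j
  generalize (dirD 0)^[j] f = g at hs hj h0
  have h2 : DifferentiableAt ℝ g (x0, y) := (hs.differentiable (by simp)) _
  have h1 : HasDerivAt (fun t : ℝ => (x0, t)) ((0 : ℝ), (1 : ℝ)) y :=
    (hasDerivAt_const y x0).prodMk (hasDerivAt_id y)
  have h3 := (h2.hasFDerivAt.comp_hasDerivAt y h1).deriv
  have h4 : g ∘ (fun t : ℝ => (x0, t)) = fun _ => 0 := funext h0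
  rw [h4, deriv_const] at h3
  unfold dirD at hj ⊢
  have e : ((1 : ℝ), c) = (1, 0) + c • ((0 : ℝ), (1 : ℝ)) := by simp
  rw [e, map_add, map_smul, hj, ← h3]
  simp

theorem dirD_iter_flat (c x0 : ℝ) (k : ℕ) : ∀ {f : ℝ × ℝ → ℝ}, ContDiff ℝ (⊤ : ℕ∞) f →
    (∀ j : ℕ, ∀ y, (dirD 0)^[j] f (x0, y) = 0) → ∀ y, (dirD c)^[k] f (x0, y) = 0 := by
  induction k with
  | zero => intro f _ h y; exact h 0 y
  | succ k ih =>
    intro f hf h y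
    exact ih (dirD_smooth c hf) (dirD_flat c x0 hf h) y

/-- **Boundary Conditions of Bv.** If `v ∈ C₀^∞(Ω♯; C^∞(Ω¹))`, i.e. `v` is
smooth, 1-periodic in its second argument, and all its derivatives in the first
variable vanish when the first argument is `0` or `1`, then
`Bv : x ↦ v(x, x/ε − 1/2)` is smooth and all its derivatives vanish at `0` and `1`. -/
theorem boundary_conditions_of_Bv (N : ℕ) (hN : 0 < N) (v : ℝ → ℝ → ℝ)
    (hsmooth : ContDiff ℝ (⊤ : ℕ∞) (fun p : ℝ × ℝ => v p.1 p.2))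
    (hper : ∀ x y : ℝ, v x (y + 1) = v x y)
    (hbc : ∀ j : ℕ, ∀ xs ∈ ({0, 1} : Set ℝ), ∀ y : ℝ,
      iteratedDeriv j (fun x => v x y) xs = 0) :
    ContDiff ℝ (⊤ : ℕ∞) (smoothAdj N v) ∧
    ∀ j : ℕ, iteratedDeriv j (smoothAdj N v) 0 = 0 ∧
      iteratedDeriv j (smoothAdj N v) 1 = 0 := by
  have hB : smoothAdj N v =
      fun x => (fun p : ℝ × ℝ => v p.1 p.2) (x, (N : ℝ) * x + (-(1 / 2))) := by
    funext x
    simp only [smoothAdj]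
    congr 1
    rw [div_div_eq_mul_div]
    ring
  have key : ∀ j : ℕ, ∀ xs ∈ ({0, 1} : Set ℝ), iteratedDeriv j (smoothAdj N v) xs = 0 := by
    intro j xs hxs
    rw [hB, iteratedDeriv_line _ _ j hsmooth]
    refine dirD_iter_flat _ xs j hsmooth (fun i y => ?_) _
    have h1 := congrFun (iteratedDeriv_line 0 y i hsmooth) xs
    have h2 := hbc i xs hxs y
    simp only [zero_mul, zero_add] at h1
    rw [← h1]
    exact h2
  refine ⟨?_, fun j => ⟨key j 0 (by simp), key j 1 (by simp)⟩⟩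
  rw [hB]
  exact hsmooth.comp (contDiff_id.prodMk ((contDiff_const.mul contDiff_id).add contDiff_const))
end

section
/- Let v : ℝ × ℝ → ℝ be continuous and 1-periodic in its second argument, and suppose the partial derivative ∂₁v with respect to the first argument exists and is continuous on ℝ × ℝ. For each positive integer N (with ε = 1/N) define, for x ∈ (0,1), R_N(x) = (T*v)(x) − (Bv)(x) + ε · (x/ε − ⌊x/ε⌋ − 1/2) · (∂₁v)(x, x/ε − 1/2). Then N · ‖R_N‖_{L²(0,1)} → 0 as N → ∞. (This is the approximation T*v = Bv − ε B(x¹ ∂v/∂x♯) + ε O_s(ε), where O_s(ε) tends to zero strongly in L².) -/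
open Set MeasureTheory Filter

theorem cell_bound (f : ℝ → ℝ) (f' : ℝ → ℝ) (e a x η y : ℝ) (he : 0 < e)
    (hx : x ∈ Icc a (a + e)) (hy : e * y = x - a - e / 2)
    (hd : ∀ s, HasDerivAt f (f' s) s)
    (hη : ∀ s ∈ Icc a (a + e), |f' s - f' x| ≤ η) :
    |(1 / e) * (∫ s in a..(a + e), f s) - f x + e * y * f' x| ≤ η * e := by
  have hc : Continuous f := continuous_iff_continuousAt.2 fun s => (hd s).continuousAt
  have hη0 : 0 ≤ η := (abs_nonneg _).trans (hη x hx)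
  have hpt : ∀ s ∈ Icc a (a + e), |f s - f x - (s - x) * f' x| ≤ η * e := by
    intro s hs
    have h := (convex_Icc a (a + e)).norm_image_sub_le_of_norm_hasDerivWithin_le
      (f := fun s => f s - s * f' x) (f' := fun s => f' s - f' x) (C := η)
      (fun t _ => by
        have := (hd t).sub ((hasDerivAt_id t).mul_const (f' x))
        rw [one_mul] at this
        exact this.hasDerivWithinAt) (fun t ht => hη t ht) hx hs
    simp only [Real.norm_eq_abs] at h
    have h2 : |s - x| ≤ e := by
      rw [abs_le]; constructor <;> linarith [hs.1, hs.2, hx.1, hx.2]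
    calc _ = |f s - s * f' x - (f x - x * f' x)| := by ring_nf
      _ ≤ η * |s - x| := h
      _ ≤ _ := by gcongr
  have hI : ∫ s in a..(a + e), (f s - f x - (s - x) * f' x)
      = (∫ s in a..(a + e), f s) - e * f x + e * (e * y) * f' x := by
    rw [intervalIntegral.integral_sub, intervalIntegral.integral_sub,
      intervalIntegral.integral_mul_const, intervalIntegral.integral_sub]
    · simp only [intervalIntegral.integral_const, integral_id, smul_eq_mul]
      rw [hy]; ring
    all_goals apply Continuous.intervalIntegrable; fun_prop
  have hb := intervalIntegral.norm_integral_le_of_norm_le_const (a := a) (b := a + e)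
    (f := fun s => f s - f x - (s - x) * f' x) (C := η * e) (fun s hs => by
      rw [uIoc_of_le (by linarith)] at hs
      exact hpt s ⟨hs.1.le, hs.2⟩)
  rw [hI, Real.norm_eq_abs, add_sub_cancel_left, abs_of_pos he] at hb
  have : (1 / e) * (∫ s in a..(a + e), f s) - f x + e * y * f' x
      = ((∫ s in a..(a + e), f s) - e * f x + e * (e * y) * f' x) / e := by
    field_simp
  rw [this, abs_div, abs_of_pos he, div_le_iff₀ he]
  exact hb

/-- **Approximation of T\* by B.** If `v` is continuous, 1-periodic in its
second argument, and has a continuous partial derivative `v₁ = ∂₁v` in the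
first argument, then `T*v = Bv − ε B(x¹ ∂v/∂x♯) + ε O_s(ε)`: the remainder
`R_N = T*v − Bv + ε (x/ε − ⌊x/ε⌋ − 1/2) ∂₁v(x, x/ε − 1/2)` satisfies
`N ‖R_N‖_{L²(0,1)} → 0`. -/
theorem approximation_Tstar_by_B (v v₁ : ℝ → ℝ → ℝ)
    (hv : Continuous (fun p : ℝ × ℝ => v p.1 p.2))
    (hper : ∀ x y : ℝ, v x (y + 1) = v x y)
    (hd : ∀ x y : ℝ, HasDerivAt (fun s => v s y) (v₁ x y) x)
    (hv₁ : Continuous (fun p : ℝ × ℝ => v₁ p.1 p.2)) :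
    Tendsto (fun N : ℕ => (N : ℝ) *
        Real.sqrt (∫ x in Ioo (0 : ℝ) 1,
          (twoScaleAdj N v x - smoothAdj N v x
            + (1 / (N : ℝ)) * (x / (1 / (N : ℝ)) - (⌊x / (1 / (N : ℝ))⌋ : ℝ) - 1 / 2)
              * v₁ x (x / (1 / (N : ℝ)) - 1 / 2)) ^ 2))
      atTop (nhds 0) := by
  have hper₁ : ∀ x y : ℝ, v₁ x (y + 1) = v₁ x y := by
    intro x y
    have h := hd x (y + 1)
    simp only [hper] at h
    exact h.unique (hd x y)
  have hz : ∀ x y : ℝ, ∀ k : ℤ, v x (y - k) = v x y := fun x y k => by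
    have h := Function.Periodic.sub_int_mul_eq (f := v x) (c := 1) (x := y) (hper x) k
    simpa using h
  have hz₁ : ∀ x y : ℝ, ∀ k : ℤ, v₁ x (y - k) = v₁ x y := fun x y k => by
    have h := Function.Periodic.sub_int_mul_eq (f := v₁ x) (c := 1) (x := y) (hper₁ x) k
    simpa using h
  have hK : IsCompact (Icc (-1 : ℝ) 2 ×ˢ Icc (-1 : ℝ) 1) := isCompact_Icc.prod isCompact_Icc
  have huc := hK.uniformContinuousOn_of_continuous hv₁.continuousOn
  rw [Metric.uniformContinuousOn_iff] at huc
  rw [Metric.tendsto_atTop]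
  intro η' hη'
  obtain ⟨η, hη, hηη⟩ := exists_between hη'
  obtain ⟨δ, hδ, H⟩ := huc η hη
  obtain ⟨M, hM⟩ := exists_nat_one_div_lt hδ
  refine ⟨M + 1, fun N hN => ?_⟩
  have hN1 : (M : ℝ) + 1 ≤ N := by exact_mod_cast hN
  have hN0 : (0 : ℝ) < N := by linarith [(Nat.cast_nonneg M : (0 : ℝ) ≤ M)]
  have heδ : 1 / (N : ℝ) < δ := lt_of_le_of_lt (by gcongr) hM
  have he1 : 1 / (N : ℝ) ≤ 1 := by
    rw [div_le_one hN0]; linarith [(Nat.cast_nonneg M : (0 : ℝ) ≤ M)]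
  have hNe : (N : ℝ) = 1 / (1 / (N : ℝ)) := by simp
  have he : 0 < 1 / (N : ℝ) := by positivity
  have key : ∀ x ∈ Ioo (0 : ℝ) 1, ‖(twoScaleAdj N v x - smoothAdj N v x
            + (1 / (N : ℝ)) * (x / (1 / (N : ℝ)) - (⌊x / (1 / (N : ℝ))⌋ : ℝ) - 1 / 2)
              * v₁ x (x / (1 / (N : ℝ)) - 1 / 2)) ^ 2‖ ≤ (η * (1 / (N : ℝ))) ^ 2 := by
    intro x hx
    rw [norm_pow, Real.norm_eq_abs]
    refine pow_le_pow_left₀ (abs_nonneg _) ?_ 2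
    unfold twoScaleAdj smoothAdj
    generalize 1 / (N : ℝ) = e at *
    have hk1 := Int.floor_le (x / e)
    have hk2 := Int.lt_floor_add_one (x / e)
    generalize ⌊x / e⌋ = k at *
    have hxe : e * (x / e) = x := by field_simp
    have hx1 : e * k ≤ x := by nlinarith
    have hx2 : x ≤ e * k + e := by nlinarith
    have e1 := hz x (x / e - 1 / 2) k
    have e2 := hz₁ x (x / e - 1 / 2) k
    rw [← e1, ← e2, show x / e - 1 / 2 - (k : ℝ) = x / e - k - 1 / 2 by ring, mul_add, mul_one]
    refine cell_bound (fun s => v s (x / e - k - 1 / 2)) (fun s => v₁ s (x / e - k - 1 / 2))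
      e (e * k) x η _ he ⟨hx1, hx2⟩ (by rw [mul_sub, mul_sub, hxe]; ring) (fun s => hd s _) ?_
    intro s hs
    have hsx : |s - x| ≤ e := by
      rw [abs_le]; constructor <;> linarith [hs.1, hs.2]
    have hsx' := abs_le.1 hsx
    have hyy : x / e - k - 1 / 2 ∈ Icc (-1 : ℝ) 1 := ⟨by linarith, by linarith⟩
    have := H (s, x / e - k - 1 / 2) ⟨⟨by linarith [hx.1], by linarith [hx.2]⟩, hyy⟩
      (x, x / e - k - 1 / 2) ⟨⟨by linarith [hx.1], by linarith [hx.2]⟩, hyy⟩ (by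
        rw [Prod.dist_eq]
        simp only [dist_self, Real.dist_eq]
        exact max_lt (by linarith) hδ)
    rw [Real.dist_eq] at this
    exact this.le
  have hI := norm_setIntegral_le_of_norm_le_const (μ := volume) (s := Ioo (0 : ℝ) 1) (by simp) key
  rw [Real.dist_eq, sub_zero, abs_of_nonneg (by positivity)]
  have hs := Real.sqrt_le_sqrt ((le_abs_self _).trans hI)
  have hv1 : volume.real (Ioo (0 : ℝ) 1) = 1 := by simp
  rw [hv1, mul_one, Real.sqrt_sq (by positivity)] at hs
  refine lt_of_le_of_lt (mul_le_mul_of_nonneg_left hs hN0.le) ?_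
  have : (N : ℝ) * (η * (1 / N)) = η := by field_simp
  rwa [this]
end

section
/- Let v : ℝ × ℝ → ℝ be continuous and 1-periodic in its second argument, and suppose the partial derivative ∂₁v with respect to the first argument exists and is continuous on ℝ × ℝ. Let w : (0,1) × (−1/2, 1/2) → ℝ be defined by w(x♯, y) = y · (∂₁v)(x♯, y). For each positive integer N (with ε = 1/N) define, for x ∈ (0,1), S_N(x) = (Bv)(x) − (T*v)(x) − ε · (T*w)(x). Then N · ‖S_N‖_{L²(0,1)} → 0 as N → ∞. (This is the converse approximation Bv = T*v + ε T*(x¹ ∂v/∂x♯) + ε O_s(ε).) -/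
open Set MeasureTheory Filter

theorem aux_cell (f f' : ℝ → ℝ) (hd : ∀ s, HasDerivAt f (f' s) s) (hc : Continuous f')
    (a x e y η : ℝ) (he : 0 < e) (hy : |y| ≤ 1 / 2) (hx : x = a + e * (y + 1 / 2))
    (hη : ∀ s ∈ Icc a (a + e), |f' s - f' x| ≤ η) :
    |f x - (1 / e) * (∫ s in a..(a + e), f s)
      - e * ((1 / e) * ∫ s in a..(a + e), y * f' s)| ≤ 2 * η * e := by
  have hfc : Continuous f := continuous_iff_continuousAt.2 fun s => (hd s).continuousAt
  have hy' := abs_le.1 hy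
  have hxm : x ∈ Icc a (a + e) := by
    constructor <;> rw [hx] <;> nlinarith
  have hη0 : 0 ≤ η := (abs_nonneg _).trans (hη x hxm)
  have key : f x - (1 / e) * (∫ s in a..(a + e), f s)
      - e * ((1 / e) * ∫ s in a..(a + e), y * f' s)
      = (1 / e) * ∫ s in a..(a + e), ((f x - f s - f' x * (x - s)) + e * y * (f' x - f' s)) := by
    have h1 : ∫ s in a..(a + e), ((f x - f s - f' x * (x - s)) + e * y * (f' x - f' s))
        = ∫ s in a..(a + e), (((f x - f' x * x + e * y * f' x) + f' x * s) - f s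
            - e * (y * f' s)) := by
      congr 1; ext s; ring
    rw [h1, intervalIntegral.integral_sub
        ((by fun_prop : Continuous _).intervalIntegrable _ _)
        ((by fun_prop : Continuous _).intervalIntegrable _ _),
      intervalIntegral.integral_sub
        ((by fun_prop : Continuous _).intervalIntegrable _ _)
        ((by fun_prop : Continuous _).intervalIntegrable _ _),
      intervalIntegral.integral_add
        ((by fun_prop : Continuous _).intervalIntegrable _ _)
        ((by fun_prop : Continuous _).intervalIntegrable _ _),
      intervalIntegral.integral_const_mul (f' x), intervalIntegral.integral_const_mul e,
      intervalIntegral.integral_const, integral_id]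
    generalize (∫ s in a..(a + e), f s) = I
    generalize (∫ s in a..(a + e), y * f' s) = J
    simp only [smul_eq_mul]
    generalize f' x = c
    generalize f x = d
    subst hx
    field_simp
    ring
  rw [key, abs_mul, abs_of_pos (by positivity : 0 < 1 / e)]
  have hb : ‖∫ s in a..(a + e), ((f x - f s - f' x * (x - s)) + e * y * (f' x - f' s))‖
      ≤ (2 * η * e) * |a + e - a| := by
    apply intervalIntegral.norm_integral_le_of_norm_le_const
    intro s hs
    rw [uIoc_of_le (by linarith)] at hs
    have hs' : s ∈ Icc a (a + e) := ⟨hs.1.le, hs.2⟩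
    have hm := (convex_Icc a (a + e)).norm_image_sub_le_of_norm_hasDerivWithin_le
      (f := fun t => f t - f' x * t) (f' := fun t => f' t - f' x * 1) (C := η)
      (fun t _ => ((hd t).sub ((hasDerivAt_id' t).const_mul (f' x))).hasDerivWithinAt)
      (fun t ht => by simpa using hη t ht) hs' hxm
    have hxs : |x - s| ≤ e := by
      rw [abs_le]; constructor <;> linarith [hxm.1, hxm.2, hs'.1, hs'.2]
    have h1 : |f x - f s - f' x * (x - s)| ≤ η * e := by
      have e1 : f x - f s - f' x * (x - s) = f x - f' x * x - (f s - f' x * s) := by ring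
      rw [e1]
      exact hm.trans (mul_le_mul_of_nonneg_left hxs hη0)
    have h2 : |e * y * (f' x - f' s)| ≤ η * e := by
      rw [abs_mul, abs_mul, abs_of_pos he, abs_sub_comm]
      calc e * |y| * |f' s - f' x| ≤ e * 1 * η := by
            gcongr
            · linarith
            · exact hη s hs'
        _ = η * e := by ring
    rw [Real.norm_eq_abs]
    exact (abs_add_le _ _).trans (by linarith)
  rw [add_sub_cancel_left, abs_of_pos he, Real.norm_eq_abs] at hb
  calc _ ≤ 1 / e * (2 * η * e * e) := by gcongr
    _ = 2 * η * e := by field_simp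

/-- **Approximation of B by T\*.** If `v` is continuous, 1-periodic in its
second argument, with continuous partial derivative `v₁ = ∂₁v`, and
`w(x♯,y) = y ∂₁v(x♯,y)`, then `Bv = T*v + ε T*(x¹ ∂v/∂x♯) + ε O_s(ε)`: the
remainder `S_N = Bv − T*v − ε T*w` satisfies `N ‖S_N‖_{L²(0,1)} → 0`. -/
theorem approximation_B_by_Tstar (v v₁ : ℝ → ℝ → ℝ)
    (hv : Continuous (fun p : ℝ × ℝ => v p.1 p.2))
    (hper : ∀ x y : ℝ, v x (y + 1) = v x y)
    (hd : ∀ x y : ℝ, HasDerivAt (fun s => v s y) (v₁ x y) x)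
    (hv₁ : Continuous (fun p : ℝ × ℝ => v₁ p.1 p.2)) :
    Tendsto (fun N : ℕ => (N : ℝ) *
        Real.sqrt (∫ x in Ioo (0 : ℝ) 1,
          (smoothAdj N v x - twoScaleAdj N v x
            - (1 / (N : ℝ)) * twoScaleAdj N (fun xs y => y * v₁ xs y) x) ^ 2))
      atTop (nhds 0) := by
  have hperZ : ∀ (n : ℤ) (x y : ℝ), v x (y - n) = v x y := by
    intro n x y
    have hp : Function.Periodic (v x) 1 := hper x
    have := hp.sub_int_mul_eq (x := y) n
    simpa using this
  rw [Metric.tendsto_atTop]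
  intro r hr
  set η := r / 4 with hηd
  have hη : 0 < η := by positivity
  have hK : IsCompact (Icc (-1 : ℝ) 2 ×ˢ Icc (-1 : ℝ) 1) := isCompact_Icc.prod isCompact_Icc
  have huc := hK.uniformContinuousOn_of_continuous hv₁.continuousOn
  rw [Metric.uniformContinuousOn_iff] at huc
  obtain ⟨δ, hδ, hu⟩ := huc η hη
  obtain ⟨M, hM⟩ := exists_nat_gt (1 / δ)
  refine ⟨M + 1, fun N hN => ?_⟩
  have hNM : (M : ℝ) + 1 ≤ N := by exact_mod_cast hN
  have hM0 : (0 : ℝ) ≤ M := Nat.cast_nonneg M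
  have hN0 : (0 : ℝ) < N := by linarith
  set e : ℝ := 1 / (N : ℝ) with hed
  have he : 0 < e := by positivity
  have he1 : e ≤ 1 := by
    rw [hed, div_le_one hN0]; linarith
  have heδ : e < δ := by
    rw [hed, div_lt_comm₀ hN0 hδ]; linarith
  have hpt : ∀ x ∈ Ioo (0 : ℝ) 1, |smoothAdj N v x - twoScaleAdj N v x
            - e * twoScaleAdj N (fun xs y => y * v₁ xs y) x| ≤ 2 * η * e := by
    intro x hx
    simp only [smoothAdj, twoScaleAdj, ← hed]
    set k : ℤ := ⌊x / e⌋ with hk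
    set y : ℝ := x / e - k - 1 / 2 with hyd
    have hk1 : (k : ℝ) ≤ x / e := Int.floor_le _
    have hk2 : x / e < k + 1 := Int.lt_floor_add_one _
    have hy : |y| ≤ 1 / 2 := by rw [abs_le]; constructor <;> linarith
    have hy' := abs_le.1 hy
    have hvx : v x (x / e - 1 / 2) = v x y := by
      rw [← hperZ k]; congr 1; rw [hyd]; ring
    have hxe : x = e * k + e * (y + 1 / 2) := by
      rw [hyd]; field_simp; ring
    rw [hvx, mul_add, mul_one]
    apply aux_cell (fun s => v s y) (fun s => v₁ s y) (fun s => hd s y)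
      (hv₁.comp (by fun_prop : Continuous fun s : ℝ => (s, y))) (e * k) x e y η he hy hxe
    intro s hs
    have h1 : e * k ≤ x := by rw [hxe]; nlinarith
    have h2 : x ≤ e * k + e := by rw [hxe]; nlinarith
    have hxs : |s - x| ≤ e := by
      rw [abs_le]; constructor <;> linarith [hs.1, hs.2]
    have hxs' := abs_le.1 hxs
    have := hu (s, y) ⟨⟨by linarith [hx.1], by linarith [hx.2]⟩, ⟨by linarith, by linarith⟩⟩
      (x, y) ⟨⟨by linarith [hx.1], by linarith [hx.2]⟩, ⟨by linarith, by linarith⟩⟩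
      (by rw [Prod.dist_eq]; simp only [dist_self, Real.dist_eq]
          exact max_lt (by linarith) hδ)
    rw [Real.dist_eq] at this
    exact this.le
  have hI := norm_setIntegral_le_of_norm_le_const (μ := volume) (s := Ioo (0 : ℝ) 1)
    (f := fun x => (smoothAdj N v x - twoScaleAdj N v x
            - e * twoScaleAdj N (fun xs y => y * v₁ xs y) x) ^ 2) (C := (2 * η * e) ^ 2)
    (by simp) (fun x hx => by
      rw [norm_pow]
      exact pow_le_pow_left₀ (norm_nonneg _) (hpt x hx) 2)
  have hvol : (volume : Measure ℝ).real (Ioo (0 : ℝ) 1) = 1 := by simp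
  rw [hvol, mul_one] at hI
  have hsq := Real.sqrt_le_sqrt ((le_abs_self _).trans hI)
  rw [Real.sqrt_sq (by positivity)] at hsq
  rw [Real.dist_eq, sub_zero, abs_of_nonneg (by positivity)]
  calc _ ≤ (N : ℝ) * (2 * η * e) := by gcongr
    _ = r / 2 := by rw [hed, hηd]; field_simp; norm_num
    _ < r := by linarith
end

section
/- The function θ¹ is continuously differentiable with (θ¹)'(y) = h/a⁰(y) − 1, it is 1-periodic (θ¹(y+1) = θ¹(y) for all y ∈ ℝ), and for every continuously differentiable 1-periodic function w : ℝ → ℝ one has ∫_{−1/2}^{1/2} a⁰(y) (θ¹)'(y) w'(y) dy = − ∫_{−1/2}^{1/2} a⁰(y) w'(y) dy. In particular, the microscopic (cell) problem with μ = 1 admits a periodic solution. (Existence part of the proposition on the linear operator associated to the microscopic problem, with the explicit one-dimensional solution.) -/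
open Set MeasureTheory intervalIntegral

/-- The harmonic mean `h = (∫_{-1/2}^{1/2} 1/a⁰)⁻¹` of `a⁰` over the unit cell. -/
noncomputable def harmMean (a : ℝ → ℝ) : ℝ :=
  (∫ y in (-(1 / 2) : ℝ)..(1 / 2), 1 / a y)⁻¹

/-- The cell corrector `θ¹(y) = ∫₀^y (h/a⁰(s) − 1) ds`. -/
noncomputable def theta1 (a : ℝ → ℝ) (y : ℝ) : ℝ :=
  ∫ s in (0 : ℝ)..y, (harmMean a / a s - 1)

/-- **Microscopic problem, existence.** With `a⁰` continuous, 1-periodic and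
bounded as `0 < α ≤ a⁰ ≤ β`, the function `θ¹` is continuously differentiable
with `(θ¹)'(y) = h/a⁰(y) − 1`, it is 1-periodic, and it solves the cell problem
with `μ = 1`: `∫ a⁰ (θ¹)' w' = −∫ a⁰ w'` for every `C¹` 1-periodic `w`. -/
theorem microscopic_problem_existence (a : ℝ → ℝ) (α β : ℝ)
    (ha : Continuous a) (haper : ∀ y, a (y + 1) = a y)
    (hα : 0 < α) (hαβ : α ≤ β) (hbound : ∀ y, α ≤ a y ∧ a y ≤ β) :
    ContDiff ℝ 1 (theta1 a) ∧
    (∀ y, deriv (theta1 a) y = harmMean a / a y - 1) ∧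
    (∀ y, theta1 a (y + 1) = theta1 a y) ∧
    ∀ w : ℝ → ℝ, ContDiff ℝ 1 w → (∀ y, w (y + 1) = w y) →
      ∫ y in (-(1 / 2) : ℝ)..(1 / 2), a y * deriv (theta1 a) y * deriv w y
        = -∫ y in (-(1 / 2) : ℝ)..(1 / 2), a y * deriv w y := by
  have hpos : ∀ y, 0 < a y := fun y => hα.trans_le (hbound y).1
  have hne : ∀ y, a y ≠ 0 := fun y => (hpos y).ne'
  have hc1 : Continuous fun y => 1 / a y := continuous_const.div ha hne
  have hc : Continuous fun y => harmMean a / a y - 1 :=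
    (continuous_const.div ha hne).sub continuous_const
  have hd : ∀ y, HasDerivAt (theta1 a) (harmMean a / a y - 1) y := fun y =>
    intervalIntegral.integral_hasDerivAt_right (hc.intervalIntegrable _ _)
      hc.stronglyMeasurable.stronglyMeasurableAtFilter hc.continuousAt
  have hderiv : ∀ y, deriv (theta1 a) y = harmMean a / a y - 1 := fun y => (hd y).deriv
  have hI : 0 < ∫ y in (-(1 / 2) : ℝ)..(1 / 2), 1 / a y :=
    intervalIntegral.intervalIntegral_pos_of_pos (hc1.intervalIntegrable _ _)
      (fun y => one_div_pos.mpr (hpos y)) (by norm_num)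
  refine ⟨?_, hderiv, ?_, ?_⟩
  · rw [contDiff_one_iff_deriv]
    refine ⟨fun y => (hd y).differentiableAt, ?_⟩
    rw [funext hderiv]
    exact hc
  · intro y
    have hper : Function.Periodic (fun y => harmMean a / a y - 1) 1 := by
      intro y
      simp only [haper]
    have h0 : ∫ s in (-(1 / 2) : ℝ)..(1 / 2), (harmMean a / a s - 1) = 0 := by
      have e : ∀ s, harmMean a / a s - 1 = harmMean a * (1 / a s) - 1 := fun s => by ring
      simp only [e]
      rw [intervalIntegral.integral_sub ((hc1.const_mul _).intervalIntegrable _ _)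
        (continuous_const.intervalIntegrable _ _), intervalIntegral.integral_const_mul]
      rw [harmMean, inv_mul_cancel₀ hI.ne']
      norm_num
    have h1 := hper.intervalIntegral_add_eq y (-(1 / 2))
    rw [show (-(1 / 2) : ℝ) + 1 = 1 / 2 by norm_num, h0] at h1
    have h2 := intervalIntegral.integral_add_adjacent_intervals
      (hc.intervalIntegrable (μ := volume) 0 y) (hc.intervalIntegrable y (y + 1))
    rw [h1, add_zero] at h2
    exact h2.symm
  · intro w hw hwper
    have hwc : Continuous (deriv w) := hw.continuous_deriv le_rfl
    have e : ∀ y, a y * deriv (theta1 a) y * deriv w y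
        = harmMean a * deriv w y - a y * deriv w y := by
      intro y
      rw [hderiv]
      have := hne y
      field_simp
    have hac : Continuous fun y => a y * deriv w y := ha.mul hwc
    simp only [e]
    rw [intervalIntegral.integral_sub ((hwc.const_mul _).intervalIntegrable _ _)
        (hac.intervalIntegrable _ _), intervalIntegral.integral_const_mul,
      intervalIntegral.integral_deriv_eq_sub
        (fun y _ => (hw.differentiable one_ne_zero) y) (hwc.intervalIntegrable _ _)]
    have := hwper (-(1 / 2))
    rw [show (-(1 / 2) : ℝ) + 1 = 1 / 2 by norm_num] at this
    rw [this]
    ring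
end

section
/- Let μ ∈ ℝ and let φ : ℝ → ℝ be continuously differentiable and 1-periodic, and suppose that for every infinitely differentiable 1-periodic function w : ℝ → ℝ one has ∫_{−1/2}^{1/2} a⁰(y) φ'(y) w'(y) dy = − μ ∫_{−1/2}^{1/2} a⁰(y) w'(y) dy. Then φ'(y) = μ · (h/a⁰(y) − 1) for all y ∈ ℝ. In particular the derivative of a periodic solution of the microscopic problem is unique and depends linearly on μ: φ' = μ (θ¹)'. (Uniqueness and linearity in the proposition on the linear operator associated to the microscopic problem.) -/
open Set MeasureTheory intervalIntegral

lemma aux_const (g : ℝ → ℝ) (hg : Continuous g) (hper : ∀ y, g (y + 1) = g y)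
    (h : ∀ w : ℝ → ℝ, ContDiff ℝ (⊤ : ℕ∞) w → (∀ y, w (y + 1) = w y) →
      ∫ y in (-(1 / 2) : ℝ)..(1 / 2), g y * deriv w y = 0) : ∃ c, ∀ y, g y = c := by
  have hP : Function.Periodic (fun y => (g y : ℂ)) (1 : ℝ) := fun y => by simp [hper]
  have hc : Continuous hP.lift :=
    continuous_coinduced_dom.mpr (by
      change Continuous (fun y => (g y : ℂ)); fun_prop)
  let G : C(AddCircle (1 : ℝ), ℂ) := ⟨hP.lift, hc⟩
  have hsin : ∀ n : ℤ, n ≠ 0 →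
      ∫ y in (-(1 / 2) : ℝ)..(1 / 2), g y * Real.cos (2 * Real.pi * n * y) = 0 := by
    intro n hn
    have hk : (2 * Real.pi * n : ℝ) ≠ 0 := by
      have : (n : ℝ) ≠ 0 := by exact_mod_cast hn
      positivity
    have := h (fun y => Real.sin (2 * Real.pi * n * y) / (2 * Real.pi * n)) (by fun_prop)
      (fun y => by
        rw [show 2 * Real.pi * n * (y + 1) = 2 * Real.pi * n * y + n * (2 * Real.pi) by ring,
          Real.sin_add_int_mul_two_pi])
    rw [← this]
    congr 1
    ext y
    have hd : HasDerivAt (fun y : ℝ => Real.sin (2 * Real.pi * n * y) / (2 * Real.pi * n))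
        (Real.cos (2 * Real.pi * n * y) * (2 * Real.pi * n * 1) / (2 * Real.pi * n)) y :=
      (((hasDerivAt_id' y).const_mul (2 * Real.pi * n)).sin).div_const _
    rw [hd.deriv, mul_one, mul_div_cancel_right₀ _ hk]
  have hcos : ∀ n : ℤ, n ≠ 0 →
      ∫ y in (-(1 / 2) : ℝ)..(1 / 2), g y * Real.sin (2 * Real.pi * n * y) = 0 := by
    intro n hn
    have hk : (2 * Real.pi * n : ℝ) ≠ 0 := by
      have : (n : ℝ) ≠ 0 := by exact_mod_cast hn
      positivity
    have := h (fun y => -Real.cos (2 * Real.pi * n * y) / (2 * Real.pi * n)) (by fun_prop)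
      (fun y => by
        rw [show 2 * Real.pi * n * (y + 1) = 2 * Real.pi * n * y + n * (2 * Real.pi) by ring,
          Real.cos_add_int_mul_two_pi])
    rw [← this]
    congr 1
    ext y
    have hd : HasDerivAt (fun y : ℝ => -Real.cos (2 * Real.pi * n * y) / (2 * Real.pi * n))
        (-(-Real.sin (2 * Real.pi * n * y) * (2 * Real.pi * n * 1)) / (2 * Real.pi * n)) y :=
      (((hasDerivAt_id' y).const_mul (2 * Real.pi * n)).cos).neg.div_const _
    rw [hd.deriv, mul_one, neg_mul, neg_neg, mul_div_cancel_right₀ _ hk]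
  have hcoef : ∀ n : ℤ, n ≠ 0 → fourierCoeff G n = 0 := by
    intro n hn
    rw [fourierCoeff_eq_intervalIntegral _ _ (-(1 / 2))]
    have e : ∀ y : ℝ, fourier (T := (1 : ℝ)) (-n) (y : AddCircle (1 : ℝ)) • G (y : AddCircle (1 : ℝ))
        = ((g y * Real.cos (2 * Real.pi * n * y) : ℝ) : ℂ)
          - ((g y * Real.sin (2 * Real.pi * n * y) : ℝ) : ℂ) * Complex.I := by
      intro y
      have hG : G (y : AddCircle (1 : ℝ)) = (g y : ℂ) := rfl
      rw [hG, fourier_coe_apply, smul_eq_mul]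
      rw [show (2 * Real.pi * Complex.I * ((-n : ℤ) : ℂ) * y / (1 : ℝ) : ℂ)
        = ((-(2 * Real.pi * n * y) : ℝ) : ℂ) * Complex.I by push_cast; ring]
      rw [Complex.exp_mul_I, ← Complex.ofReal_cos, ← Complex.ofReal_sin, Real.cos_neg, Real.sin_neg]
      push_cast; ring
    simp_rw [e]
    rw [show (-(1 / 2) + 1 : ℝ) = 1 / 2 by norm_num]
    rw [intervalIntegral.integral_sub, intervalIntegral.integral_mul_const,
      intervalIntegral.integral_ofReal, intervalIntegral.integral_ofReal, hsin n hn, hcos n hn]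
    · simp
    · exact Continuous.intervalIntegrable (by fun_prop) _ _
    · exact Continuous.intervalIntegrable (by fun_prop) _ _
  have hsum : Summable (fourierCoeff G) :=
    summable_of_ne_finset_zero (s := {0}) (fun n hn => hcoef n (by simpa using hn))
  refine ⟨(fourierCoeff G 0).re, fun y => ?_⟩
  have h1 := has_pointwise_sum_fourier_series_of_summable hsum (y : AddCircle (1 : ℝ))
  have h2 := hasSum_single (f := fun n => fourierCoeff G n • fourier n (y : AddCircle (1 : ℝ))) 0
    (fun n hn => by simp [hcoef n hn])
  have h3 : (g y : ℂ) = _ := h1.unique h2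
  have := congrArg Complex.re h3
  simpa using this

/-- **Microscopic problem, uniqueness and linearity.** With `a⁰` continuous,
1-periodic and bounded as `0 < α ≤ a⁰ ≤ β`: if `φ` is `C¹`, 1-periodic and
satisfies `∫ a⁰ φ' w' = −μ ∫ a⁰ w'` for every smooth 1-periodic `w`, then
`φ'(y) = μ (h/a⁰(y) − 1) = μ (θ¹)'(y)` for all `y`. -/
theorem microscopic_problem_uniqueness (a : ℝ → ℝ) (α β : ℝ)
    (ha : Continuous a) (haper : ∀ y, a (y + 1) = a y)
    (hα : 0 < α) (hαβ : α ≤ β) (hbound : ∀ y, α ≤ a y ∧ a y ≤ β)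
    (μ : ℝ) (φ : ℝ → ℝ) (hφ : ContDiff ℝ 1 φ) (hφper : ∀ y, φ (y + 1) = φ y)
    (hweak : ∀ w : ℝ → ℝ, ContDiff ℝ (⊤ : ℕ∞) w → (∀ y, w (y + 1) = w y) →
      ∫ y in (-(1 / 2) : ℝ)..(1 / 2), a y * deriv φ y * deriv w y
        = -(μ * ∫ y in (-(1 / 2) : ℝ)..(1 / 2), a y * deriv w y)) :
    ∀ y, deriv φ y = μ * (harmMean a / a y - 1) := by
  have hpos : ∀ y, 0 < a y := fun y => hα.trans_le (hbound y).1
  have hne : ∀ y, a y ≠ 0 := fun y => (hpos y).ne'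
  have hdφ : Continuous (deriv φ) := hφ.continuous_deriv le_rfl
  have hdper : ∀ y, deriv φ (y + 1) = deriv φ y := by
    intro y
    rw [← deriv_comp_add_const]
    congr 1
    ext z
    exact hφper z
  obtain ⟨c, hc⟩ := aux_const (fun y => a y * deriv φ y + μ * a y) (by fun_prop)
    (fun y => by simp only [haper, hdper]) (by
      intro w hw hwper
      have hdw : Continuous (deriv w) := hw.continuous_deriv (by simp)
      have h := hweak w hw hwper
      rw [show (fun y => (a y * deriv φ y + μ * a y) * deriv w y)
        = fun y => a y * deriv φ y * deriv w y + μ * (a y * deriv w y) by ext y; ring]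
      rw [intervalIntegral.integral_add, intervalIntegral.integral_const_mul, h]
      · ring
      · exact Continuous.intervalIntegrable (by fun_prop) _ _
      · exact Continuous.intervalIntegrable (by fun_prop) _ _)
  have hd : ∀ y, deriv φ y = c * (1 / a y) - μ := by
    intro y
    have := hc y
    have := hne y
    field_simp
    linarith
  have hinv : Continuous (fun y => 1 / a y) := continuous_const.div ha hne
  have hI : 0 < ∫ y in (-(1 / 2) : ℝ)..(1 / 2), 1 / a y :=
    intervalIntegral.intervalIntegral_pos_of_pos (hinv.intervalIntegrable _ _)
      (fun y => one_div_pos.mpr (hpos y)) (by norm_num)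
  have hint : ∫ y in (-(1 / 2) : ℝ)..(1 / 2), deriv φ y = 0 := by
    rw [intervalIntegral.integral_deriv_eq_sub
      (fun x _ => (hφ.differentiable (by simp)).differentiableAt)
      (hdφ.intervalIntegrable _ _)]
    have := hφper (-(1 / 2))
    rw [show (-(1 / 2) + 1 : ℝ) = 1 / 2 by norm_num] at this
    linarith
  have hμ : c * (∫ y in (-(1 / 2) : ℝ)..(1 / 2), 1 / a y) = μ := by
    simp_rw [hd] at hint
    rw [intervalIntegral.integral_sub ((hinv.const_mul c).intervalIntegrable _ _)
      (continuous_const.intervalIntegrable _ _), intervalIntegral.integral_const_mul,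
      intervalIntegral.integral_const, smul_eq_mul] at hint
    linarith
  have hcμ : c = μ * harmMean a := by
    unfold harmMean
    rw [← hμ, mul_assoc, mul_inv_cancel₀ hI.ne', mul_one]
  intro y
  rw [hd y, hcμ]
  ring
end

section
/- The homogenized coefficient a^H = ∫_{−1/2}^{1/2} a⁰(y) (1 + (θ¹)'(y))² dy equals h, the harmonic mean of a⁰ over the unit cell: ∫_{−1/2}^{1/2} a⁰(y) (1 + (θ¹)'(y))² dy = (∫_{−1/2}^{1/2} 1/a⁰(y) dy)⁻¹. -/
open Set MeasureTheory intervalIntegral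

/-- **The homogenized coefficient is the harmonic mean.**
`a^H = ∫_{-1/2}^{1/2} a⁰ (1 + (θ¹)')² = (∫_{-1/2}^{1/2} 1/a⁰)⁻¹ = h`. -/
theorem homogenized_coefficient_is_harmonic_mean (a : ℝ → ℝ) (α β : ℝ)
    (ha : Continuous a) (haper : ∀ y, a (y + 1) = a y)
    (hα : 0 < α) (hαβ : α ≤ β) (hbound : ∀ y, α ≤ a y ∧ a y ≤ β) :
    ∫ y in (-(1 / 2) : ℝ)..(1 / 2), a y * (1 + deriv (theta1 a) y) ^ 2
      = (∫ y in (-(1 / 2) : ℝ)..(1 / 2), 1 / a y)⁻¹ := by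
  have hne : ∀ y, a y ≠ 0 := fun y => (lt_of_lt_of_le hα (hbound y).1).ne'
  have hc : Continuous fun s => harmMean a / a s - 1 :=
    (continuous_const.div ha hne).sub continuous_const
  have hd : ∀ y, deriv (theta1 a) y = harmMean a / a y - 1 := fun y =>
    hc.deriv_integral (fun s => harmMean a / a s - 1) 0 y
  have he : ∀ y, a y * (1 + deriv (theta1 a) y) ^ 2 = harmMean a ^ 2 * (1 / a y) := by
    intro y
    have := hne y
    rw [hd]
    field_simp
    ring
  simp_rw [he]
  rw [intervalIntegral.integral_const_mul]
  unfold harmMean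
  set I := ∫ y in (-(1 / 2) : ℝ)..(1 / 2), 1 / a y
  by_cases h : I = 0
  · simp [h]
  · field_simp
end

section
/- First Block (constraint on u⁰): under the sequence setting and the two-scale expansion hypothesis, the limit u⁰ is independent of the microscopic variable: there exists ū ∈ L²(0,1) such that u⁰(x,y) = ū(x) for almost every (x,y) ∈ (0,1) × (−1/2, 1/2). -/
open Set MeasureTheory Filter

/-- The two-scale domain `(0,1) × (-1/2, 1/2)`. -/
noncomputable def twoScaleDom : Set (ℝ × ℝ) :=
  Ioo (0 : ℝ) 1 ×ˢ Ioo (-(1 / 2) : ℝ) (1 / 2)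

lemma tsq_holder (f : ℝ → ℝ) (hf : ContDiff ℝ 1 f) (C : ℝ)
    (hb : (∫ x in Ioo (0 : ℝ) 1, (deriv f x) ^ 2) ≤ C ^ 2) (a b : ℝ) (ha : 0 ≤ a) (hab : a ≤ b)
    (hb1 : b ≤ 1) : (f b - f a) ^ 2 ≤ (b - a) * C ^ 2 := by
  rcases hab.eq_or_lt with rfl | hlt
  · simp
  have hd : Continuous (deriv f) := hf.continuous_deriv le_rfl
  have hftc : ∫ x in a..b, deriv f x = f b - f a :=
    intervalIntegral.integral_deriv_eq_sub
      (fun x _ => (hf.differentiable one_ne_zero).differentiableAt) (hd.intervalIntegrable _ _)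
  have hle : ∫ x in a..b, (deriv f x) ^ 2 ≤ C ^ 2 := by
    refine le_trans ?_ hb
    rw [← integral_Ioc_eq_integral_Ioo, ← intervalIntegral.integral_of_le zero_le_one]
    exact intervalIntegral.integral_mono_interval ha hab hb1
      (Eventually.of_forall fun x => sq_nonneg _) ((hd.pow 2).intervalIntegrable _ _)
  set m := (f b - f a) / (b - a) with hm
  have h0 : 0 ≤ ∫ x in a..b, (deriv f x - m) ^ 2 :=
    intervalIntegral.integral_nonneg hab (fun x _ => sq_nonneg _)
  have he : ∫ x in a..b, (deriv f x - m) ^ 2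
      = (∫ x in a..b, (deriv f x) ^ 2) - 2 * m * (f b - f a) + m ^ 2 * (b - a) := by
    have : ∀ x, (deriv f x - m) ^ 2 = (deriv f x) ^ 2 - 2 * m * deriv f x + m ^ 2 := by
      intro x; ring
    simp_rw [this]
    rw [intervalIntegral.integral_add, intervalIntegral.integral_sub,
      intervalIntegral.integral_const_mul, hftc, intervalIntegral.integral_const, smul_eq_mul]
    · ring
    all_goals exact Continuous.intervalIntegrable (by fun_prop) _ _
  have hpos : 0 < b - a := sub_pos.2 hlt
  have hmm : f b - f a = m * (b - a) := by rw [hm]; field_simp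
  rw [he] at h0
  rw [hmm] at h0 ⊢
  have : m ^ 2 * (b - a) ≤ C ^ 2 := by nlinarith
  nlinarith

lemma tsq_holder' (f : ℝ → ℝ) (hf : ContDiff ℝ 1 f) (C : ℝ) (hC : 0 < C)
    (hb : (∫ x in Ioo (0 : ℝ) 1, (deriv f x) ^ 2) ≤ C ^ 2) (a b : ℝ) (ha : a ∈ Icc (0 : ℝ) 1)
    (hb1 : b ∈ Icc (0 : ℝ) 1) : |f b - f a| ≤ √|b - a| * C := by
  refine abs_le_of_sq_le_sq ?_ (by positivity)
  rw [mul_pow, Real.sq_sqrt (abs_nonneg _)]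
  rcases le_total a b with h | h
  · rw [abs_of_nonneg (sub_nonneg.2 h)]
    exact tsq_holder f hf C hb a b ha.1 h hb1.2
  · rw [abs_of_nonpos (sub_nonpos.2 h), neg_sub]
    have := tsq_holder f hf C hb b a hb1.1 h ha.2
    nlinarith

lemma tsq_mem (N : ℕ) (hN : 0 < N) (x y : ℝ) (hx : x ∈ Ioo (0 : ℝ) 1)
    (hy : y ∈ Ioo (-(1 / 2) : ℝ) (1 / 2)) :
    (1 / (N : ℝ)) * ((⌊x / (1 / (N : ℝ))⌋ : ℝ) + 1 / 2) + (1 / (N : ℝ)) * y ∈ Icc (0 : ℝ) 1 := by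
  have hN' : (0 : ℝ) < N := by exact_mod_cast hN
  have e : x / (1 / (N : ℝ)) = x * N := by field_simp
  rw [e]
  have h1 : (0 : ℝ) ≤ (⌊x * N⌋ : ℝ) := by
    have : 0 ≤ ⌊x * N⌋ := Int.floor_nonneg.2 (by have := hx.1; positivity)
    exact_mod_cast this
  have h2 : (⌊x * N⌋ : ℝ) + 1 ≤ N := by
    have : ⌊x * N⌋ < (N : ℤ) := Int.floor_lt.2 (by have := hx.2; push_cast; nlinarith)
    exact_mod_cast this
  rw [← mul_add, one_div_mul_eq_div]
  obtain ⟨h3, h4⟩ := hy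
  constructor
  · apply div_nonneg _ hN'.le; linarith
  · rw [div_le_one hN']; linarith

lemma tsq_bound (N : ℕ) (hN : 0 < N) (f : ℝ → ℝ) (hf : ContDiff ℝ 1 f) (C : ℝ) (hC : 0 < C)
    (hb : (∫ x in Ioo (0 : ℝ) 1, (deriv f x) ^ 2) ≤ C ^ 2) (x y : ℝ) (hx : x ∈ Ioo (0 : ℝ) 1)
    (hy : y ∈ Ioo (-(1 / 2) : ℝ) (1 / 2)) :
    |twoScale N f x y - twoScale N f x 0| ≤ √(1 / (N : ℝ)) * C := by
  refine (tsq_holder' f hf C hC hb _ _ (tsq_mem N hN x 0 hx (by norm_num))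
    (tsq_mem N hN x y hx hy)).trans ?_
  gcongr
  rw [mul_zero, add_zero, add_sub_cancel_left, abs_mul, abs_of_nonneg (by positivity)]
  have : |y| ≤ 1 := abs_le.2 ⟨by linarith [hy.1], by linarith [hy.2]⟩
  exact mul_le_of_le_one_right (by positivity) this

lemma tsq_meas (N : ℕ) (f : ℝ → ℝ) (hf : ContDiff ℝ 1 f) :
    Measurable (fun p : ℝ × ℝ => twoScale N f p.1 p.2) := by
  unfold twoScale
  have h1 : Measurable (fun p : ℝ × ℝ => ((⌊p.1 / (1 / (N : ℝ))⌋ : ℤ) : ℝ)) :=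
    (measurable_from_top (f := fun z : ℤ => (z : ℝ))).comp
      (Int.measurable_floor.comp (measurable_fst.div_const _))
  exact hf.continuous.measurable.comp
    (((h1.add_const _).const_mul _).add (measurable_snd.const_mul _))

lemma tsq_fiber {μ ν : Measure ℝ} [IsProbabilityMeasure μ] [IsProbabilityMeasure ν]
    (u0 : ℝ × ℝ → ℝ) (h : MemLp u0 2 (μ.prod ν)) :
    MemLp (fun x => ∫ y, u0 (x, y) ∂ν) 2 μ := by
  have hi : Integrable u0 (μ.prod ν) := h.integrable one_le_two
  have hs : Integrable (fun p => u0 p ^ 2) (μ.prod ν) := h.integrable_sq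
  have hm : AEStronglyMeasurable (fun x => ∫ y, u0 (x, y) ∂ν) μ :=
    hi.integral_prod_left.aestronglyMeasurable
  rw [memLp_two_iff_integrable_sq hm]
  refine hs.integral_prod_left.mono (hm.pow 2) ?_
  filter_upwards [hi.prod_right_ae, hs.prod_right_ae] with x h1 h2
  rw [Real.norm_of_nonneg (sq_nonneg _),
    Real.norm_of_nonneg (integral_nonneg fun y => sq_nonneg _)]
  set m := ∫ y, u0 (x, y) ∂ν
  have h0 : 0 ≤ ∫ y, (u0 (x, y) - m) ^ 2 ∂ν := integral_nonneg fun y => sq_nonneg _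
  have : ∀ y, (u0 (x, y) - m) ^ 2 = u0 (x, y) ^ 2 - 2 * m * u0 (x, y) + m ^ 2 := by
    intro y; ring
  simp_rw [this] at h0
  have h3 : Integrable (fun y => u0 (x, y) ^ 2 - 2 * m * u0 (x, y)) ν := h2.sub (h1.const_mul _)
  rw [integral_add h3 (integrable_const _),
    integral_sub h2 (h1.const_mul _), integral_const_mul] at h0
  simp only [integral_const, probReal_univ, one_smul] at h0
  change 0 ≤ _ - 2 * m * m + m ^ 2 at h0
  nlinarith

lemma tsq_orth {μ ν : Measure ℝ} [IsProbabilityMeasure μ] [IsProbabilityMeasure ν]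
    (u0 : ℝ × ℝ → ℝ) (hi : Integrable u0 (μ.prod ν)) (g : ℝ → ℝ)
    (hg : Integrable (fun p : ℝ × ℝ => g p.1 * (u0 p - ∫ y, u0 (p.1, y) ∂ν)) (μ.prod ν)) :
    ∫ p : ℝ × ℝ, g p.1 * (u0 p - ∫ y, u0 (p.1, y) ∂ν) ∂(μ.prod ν) = 0 := by
  rw [integral_prod _ hg]
  apply integral_eq_zero_of_ae
  filter_upwards [hi.prod_right_ae] with x h1
  simp only [Pi.zero_apply]
  rw [integral_const_mul, integral_sub h1 (integrable_const _)]
  simp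

lemma tsq_dom : (volume.restrict twoScaleDom : Measure (ℝ × ℝ)) =
    (volume.restrict (Ioo (0 : ℝ) 1)).prod (volume.restrict (Ioo (-(1 / 2) : ℝ) (1 / 2))) := by
  rw [Measure.prod_restrict]; rfl

/-- **First Block: constraint on `u⁰`.** Under the uniform `H¹` bounds and the
two-scale expansion hypothesis, the two-scale limit `u⁰` is independent of the
microscopic variable: `u⁰(x,y) = ū(x)` a.e. for some `ū ∈ L²(0,1)`. -/
theorem first_block_u0_independent_of_microscopic_variable
    (u : ℕ → ℝ → ℝ) (hu : ∀ N, ContDiff ℝ 1 (u N))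
    (C : ℝ) (hC : 0 < C)
    (hbound : ∀ N : ℕ, (∫ x in Ioo (0 : ℝ) 1, (u N x) ^ 2) ≤ C ^ 2 ∧
      (∫ x in Ioo (0 : ℝ) 1, (deriv (u N) x) ^ 2) ≤ C ^ 2)
    (u0 u1 : ℝ × ℝ → ℝ)
    (hu0 : MemLp u0 2 (volume.restrict twoScaleDom))
    (hu1 : MemLp u1 2 (volume.restrict twoScaleDom))
    (hexp : ∀ v : ℝ × ℝ → ℝ, MemLp v 2 (volume.restrict twoScaleDom) →
      Tendsto (fun N : ℕ => (N : ℝ) *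
          ∫ p in twoScaleDom,
            (twoScale N (u N) p.1 p.2 - u0 p - (1 / (N : ℝ)) * u1 p) * v p)
        atTop (nhds 0)) :
    ∃ ub : ℝ → ℝ, MemLp ub 2 (volume.restrict (Ioo (0 : ℝ) 1)) ∧
      ∀ᵐ p ∂(volume.restrict twoScaleDom), u0 p = ub p.1 := by
  have i1 : IsProbabilityMeasure (volume.restrict (Ioo (0 : ℝ) 1)) := ⟨by simp⟩
  have i2 : IsProbabilityMeasure (volume.restrict (Ioo (-(1 / 2) : ℝ) (1 / 2))) :=
    ⟨by simp; norm_num⟩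
  have hdomain : ∀ᵐ p ∂(volume.restrict twoScaleDom), p ∈ twoScaleDom :=
    ae_restrict_mem (measurableSet_Ioo.prod measurableSet_Ioo)
  rw [tsq_dom] at *
  set μ : Measure ℝ := volume.restrict (Ioo (0 : ℝ) 1) with hμ
  set ν : Measure ℝ := volume.restrict (Ioo (-(1 / 2) : ℝ) (1 / 2)) with hν
  set ub : ℝ → ℝ := fun x => ∫ y, u0 (x, y) ∂ν with hub
  have hubL : MemLp ub 2 μ := tsq_fiber u0 hu0
  have hub2 : MemLp (fun p : ℝ × ℝ => ub p.1) 2 (μ.prod ν) :=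
    hubL.comp_measurePreserving measurePreserving_fst
  refine ⟨ub, hubL, ?_⟩
  have hu0i : Integrable u0 (μ.prod ν) := hu0.integrable one_le_two
  set v : ℝ × ℝ → ℝ := fun p => u0 p - ub p.1 with hv
  have hvL : MemLp v 2 (μ.prod ν) := hu0.sub hub2
  have hvi : Integrable v (μ.prod ν) := hvL.integrable one_le_two
  have hu0v : Integrable (fun p => u0 p * v p) (μ.prod ν) := hu0.integrable_mul hvL
  have hu1v : Integrable (fun p => u1 p * v p) (μ.prod ν) := hu1.integrable_mul hvL
  have hubv : Integrable (fun p => ub p.1 * v p) (μ.prod ν) := hub2.integrable_mul hvL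
  have hvv : Integrable (fun p => v p ^ 2) (μ.prod ν) := hvL.integrable_sq
  have horth : ∫ p, ub p.1 * v p ∂(μ.prod ν) = 0 := tsq_orth u0 hu0i ub hubv
  have huv : ∫ p, u0 p * v p ∂(μ.prod ν) = ∫ p, v p ^ 2 ∂(μ.prod ν) := by
    have : ∀ p, u0 p * v p = v p ^ 2 + ub p.1 * v p := by intro p; simp only [hv]; ring
    simp_rw [this]
    rw [integral_add hvv hubv, horth, add_zero]
  set K := ∫ p, |v p| ∂(μ.prod ν) with hK
  -- bound on the transform paired with v
  have hT : ∀ N : ℕ, 0 < N → Integrable (fun p => twoScale N (u N) p.1 p.2 * v p) (μ.prod ν) ∧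
      |∫ p, twoScale N (u N) p.1 p.2 * v p ∂(μ.prod ν)| ≤ √(1 / (N : ℝ)) * C * K := by
    intro N hN
    have hmeas := tsq_meas N (u N) (hu N)
    have hmeas0 : Measurable (fun p : ℝ × ℝ => twoScale N (u N) p.1 0) :=
      hmeas.comp (measurable_fst.prodMk measurable_const)
    obtain ⟨M, hM⟩ := (isCompact_Icc (a := (0 : ℝ)) (b := 1)).exists_bound_of_continuousOn
      (hu N).continuous.continuousOn
    have hI0 : Integrable (fun p => twoScale N (u N) p.1 0 * v p) (μ.prod ν) := by
      refine hvi.bdd_mul (c := M) hmeas0.aestronglyMeasurable ?_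
      filter_upwards [hdomain] with p hp
      exact hM _ (tsq_mem N hN p.1 0 hp.1 (by norm_num))
    have hbd : ∀ᵐ p ∂(μ.prod ν),
        ‖twoScale N (u N) p.1 p.2 - twoScale N (u N) p.1 0‖ ≤ √(1 / (N : ℝ)) * C := by
      filter_upwards [hdomain] with p hp
      exact tsq_bound N hN (u N) (hu N) C hC (hbound N).2 p.1 p.2 hp.1 hp.2
    have hI1 : Integrable (fun p => (twoScale N (u N) p.1 p.2 - twoScale N (u N) p.1 0) * v p)
        (μ.prod ν) := hvi.bdd_mul (hmeas.sub hmeas0).aestronglyMeasurable hbd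
    have hz : ∫ p, twoScale N (u N) p.1 0 * v p ∂(μ.prod ν) = 0 :=
      tsq_orth u0 hu0i (fun x => twoScale N (u N) x 0) hI0
    have hs : (fun p => twoScale N (u N) p.1 p.2 * v p) = fun p =>
        (twoScale N (u N) p.1 p.2 - twoScale N (u N) p.1 0) * v p
          + twoScale N (u N) p.1 0 * v p := by
      funext p; ring
    rw [hs]
    refine ⟨hI1.add hI0, ?_⟩
    rw [integral_add hI1 hI0, hz, add_zero, hK, ← integral_const_mul]
    rw [← Real.norm_eq_abs]
    refine norm_integral_le_of_norm_le (hvi.abs.const_mul _) ?_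
    filter_upwards [hbd] with p hp
    rw [norm_mul, Real.norm_eq_abs (v p)]
    exact mul_le_mul_of_nonneg_right hp (abs_nonneg _)
  have hinv : Tendsto (fun N : ℕ => 1 / (N : ℝ)) atTop (nhds 0) :=
    tendsto_one_div_atTop_nhds_zero_nat
  have hsqrt : Tendsto (fun N : ℕ => √(1 / (N : ℝ)) * C * K) atTop (nhds 0) := by
    have := ((Real.continuous_sqrt.tendsto 0).comp hinv).mul_const (C * K)
    simpa [Function.comp_def, mul_assoc] using this
  have hTlim : Tendsto (fun N : ℕ => ∫ p, twoScale N (u N) p.1 p.2 * v p ∂(μ.prod ν))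
      atTop (nhds 0) := by
    refine squeeze_zero_norm' ?_ hsqrt
    filter_upwards [eventually_gt_atTop 0] with N hN
    exact (hT N hN).2
  have hA := hinv.mul (hexp v hvL)
  have hB := hTlim.sub (hA.add (hinv.mul_const (∫ p, u1 p * v p ∂(μ.prod ν))))
  have hconst : Tendsto (fun _ : ℕ => ∫ p, v p ^ 2 ∂(μ.prod ν)) atTop (nhds 0) := by
    simp only [mul_zero, zero_mul, add_zero, sub_zero] at hB
    refine hB.congr' ?_
    filter_upwards [eventually_gt_atTop 0] with N hN
    have hN' : (N : ℝ) ≠ 0 := by exact_mod_cast hN.ne'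
    have hs : (fun p : ℝ × ℝ => (twoScale N (u N) p.1 p.2 - u0 p - (1 / (N : ℝ)) * u1 p) * v p)
        = fun p => twoScale N (u N) p.1 p.2 * v p - u0 p * v p
          - (1 / (N : ℝ)) * (u1 p * v p) := by
      funext p; ring
    have h3 : Integrable (fun p => twoScale N (u N) p.1 p.2 * v p - u0 p * v p) (μ.prod ν) :=
      (hT N hN).1.sub hu0v
    rw [hs, integral_sub h3 (hu1v.const_mul _),
      integral_sub (hT N hN).1 hu0v, integral_const_mul, huv]
    field_simp
    ring
  have hzero : ∫ p, v p ^ 2 ∂(μ.prod ν) = 0 := tendsto_nhds_unique tendsto_const_nhds hconst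
  have hae := (integral_eq_zero_iff_of_nonneg (fun p => sq_nonneg (v p)) hvv).1 hzero
  filter_upwards [hae] with p hp
  have : v p = 0 := by simpa using hp
  exact sub_eq_zero.1 this
end

section
/- Second Block (two-scale limit of the derivative): under the sequence setting, the two-scale expansion hypothesis, and the weak two-scale convergence of the derivatives to η, one has η = ∂u¹/∂y in the sense of distributions: for every infinitely differentiable φ : ℝ² → ℝ with compact support contained in (0,1) × (−1/2, 1/2), ∫∫_{(0,1)×(−1/2,1/2)} η φ dx dy = − ∫∫_{(0,1)×(−1/2,1/2)} u¹ (∂φ/∂y) dx dy. -/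
open Set MeasureTheory Filter

lemma dom_meas : MeasurableSet twoScaleDom := measurableSet_Ioo.prod measurableSet_Ioo

lemma dom_fin : volume twoScaleDom < ⊤ := by
  have h : twoScaleDom ⊆ Icc (0 : ℝ) 1 ×ˢ Icc (-(1 / 2) : ℝ) (1 / 2) :=
    prod_mono Ioo_subset_Icc_self Ioo_subset_Icc_self
  exact (measure_mono h).trans_lt (isCompact_Icc.prod isCompact_Icc).measure_lt_top

lemma cont_bdd (g : ℝ × ℝ → ℝ) (hg : Continuous g) : ∃ M, ∀ p ∈ twoScaleDom, ‖g p‖ ≤ M := by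
  have h : twoScaleDom ⊆ Icc (0 : ℝ) 1 ×ˢ Icc (-(1 / 2) : ℝ) (1 / 2) :=
    prod_mono Ioo_subset_Icc_self Ioo_subset_Icc_self
  obtain ⟨M, hM⟩ := (isCompact_Icc.prod isCompact_Icc).exists_bound_of_continuousOn
    (s := Icc (0 : ℝ) 1 ×ˢ Icc (-(1 / 2) : ℝ) (1 / 2)) hg.continuousOn
  exact ⟨M, fun p hp => hM p (h hp)⟩

lemma cont_memLp (g : ℝ × ℝ → ℝ) (hg : Continuous g) :
    MemLp g 2 (volume.restrict twoScaleDom) := by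
  have : IsFiniteMeasure (volume.restrict twoScaleDom) := ⟨by simpa using dom_fin⟩
  obtain ⟨M, hM⟩ := cont_bdd g hg
  exact MemLp.of_bound hg.aestronglyMeasurable M
    ((ae_restrict_iff' dom_meas).2 (Eventually.of_forall hM))

lemma ts_meas (N : ℕ) (f : ℝ → ℝ) (hf : Continuous f) :
    Measurable (fun p : ℝ × ℝ => twoScale N f p.1 p.2) := by
  unfold twoScale
  apply hf.measurable.comp
  have : Measurable (fun p : ℝ × ℝ => ((⌊p.1 / (1 / (N : ℝ))⌋ : ℤ) : ℝ)) :=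
    measurable_from_top.comp (Int.measurable_floor.comp (measurable_fst.div_const _))
  fun_prop

lemma ts_memLp (N : ℕ) (hN : 0 < N) (f : ℝ → ℝ) (hf : Continuous f) :
    MemLp (fun p : ℝ × ℝ => twoScale N f p.1 p.2) 2 (volume.restrict twoScaleDom) := by
  have : IsFiniteMeasure (volume.restrict twoScaleDom) := ⟨by simpa using dom_fin⟩
  obtain ⟨M, hM⟩ := (isCompact_Icc (a := (-2 : ℝ)) (b := 3)).exists_bound_of_continuousOn
    hf.continuousOn
  refine MemLp.of_bound (ts_meas N f hf).aestronglyMeasurable M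
    ((ae_restrict_iff' dom_meas).2 (Eventually.of_forall ?_))
  rintro ⟨x, y⟩ ⟨⟨hx0, hx1⟩, hy0, hy1⟩
  apply hM
  simp only at *
  have hN' : (1 : ℝ) ≤ N := by exact_mod_cast hN
  set e : ℝ := 1 / (N : ℝ) with he
  have he0 : 0 < e := by positivity
  have he1 : e ≤ 1 := by rw [he, div_le_one (by linarith)]; exact hN'
  have h1 : e * (⌊x / e⌋ : ℝ) ≤ x := by
    have := mul_le_mul_of_nonneg_left (Int.floor_le (x / e)) he0.le
    rwa [mul_div_cancel₀ _ he0.ne'] at this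
  have h2 : (0 : ℝ) ≤ (⌊x / e⌋ : ℝ) := by
    exact_mod_cast Int.floor_nonneg.2 (by positivity)
  have h3 := mul_nonneg he0.le h2
  constructor <;> nlinarith

lemma ts_parts (N : ℕ) (hN : 0 < N) (f : ℝ → ℝ) (hf : ContDiff ℝ 1 f)
    (φ : ℝ × ℝ → ℝ) (hφ : ContDiff ℝ (⊤ : ℕ∞) φ) (hs : tsupport φ ⊆ twoScaleDom)
    (hc : Continuous (fun p : ℝ × ℝ => deriv (fun y => φ (p.1, y)) p.2)) :
    ∫ p in twoScaleDom, twoScale N (deriv f) p.1 p.2 * φ p =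
      -((N : ℝ) * ∫ p in twoScaleDom, twoScale N f p.1 p.2 *
        deriv (fun y => φ (p.1, y)) p.2) := by
  have hf' : Continuous (deriv f) := hf.continuous_deriv le_rfl
  have hN' : (N : ℝ) ≠ 0 := by positivity
  have I1 : IntegrableOn (fun p : ℝ × ℝ => twoScale N (deriv f) p.1 p.2 * φ p) twoScaleDom :=
    (ts_memLp N hN _ hf').integrable_mul (cont_memLp _ hφ.continuous)
  have I2 : IntegrableOn (fun p : ℝ × ℝ => twoScale N f p.1 p.2 *
        deriv (fun y => φ (p.1, y)) p.2) twoScaleDom :=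
    (ts_memLp N hN _ hf.continuous).integrable_mul (cont_memLp _ hc)
  unfold twoScaleDom at I1 I2 ⊢
  rw [Measure.volume_eq_prod] at I1 I2 ⊢
  rw [setIntegral_prod _ I1, setIntegral_prod _ I2, ← integral_const_mul, ← integral_neg]
  congr 1
  ext x
  rw [← integral_Ioc_eq_integral_Ioo, ← integral_Ioc_eq_integral_Ioo,
    ← intervalIntegral.integral_of_le (by norm_num), ← intervalIntegral.integral_of_le (by norm_num)]
  have z : ∀ y, y ∉ Ioo (-(1/2) : ℝ) (1/2) → φ (x, y) = 0 := fun y hy =>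
    image_eq_zero_of_notMem_tsupport fun h => hy (hs h).2
  have hd : ∀ y, HasDerivAt (fun y => φ (x, y)) (deriv (fun y => φ (x, y)) y) y := fun y => by
    have : Differentiable ℝ φ := hφ.differentiable (by simp)
    exact DifferentiableAt.hasDerivAt (by fun_prop)
  have hdu : ∀ y, HasDerivAt (fun y => twoScale N f x y)
      (1 / (N : ℝ) * twoScale N (deriv f) x y) y := fun y => by
    unfold twoScale
    have h1 := (hf.differentiable one_ne_zero
      ((1 / (N : ℝ)) * ((⌊x / (1 / (N : ℝ))⌋ : ℝ) + 1 / 2) + (1 / (N : ℝ)) * y)).hasDerivAt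
    have h2 : HasDerivAt (fun y : ℝ => (1 / (N : ℝ)) * ((⌊x / (1 / (N : ℝ))⌋ : ℝ) + 1 / 2)
      + (1 / (N : ℝ)) * y) (1 / (N : ℝ)) y := by
      simpa using ((hasDerivAt_id y).const_mul (1 / (N : ℝ))).const_add
        ((1 / (N : ℝ)) * ((⌊x / (1 / (N : ℝ))⌋ : ℝ) + 1 / 2))
    rw [mul_comm (1 / (N : ℝ)) (deriv f _)]
    exact h1.comp y h2
  have c1 : Continuous (fun y => 1 / (N : ℝ) * twoScale N (deriv f) x y) := by
    unfold twoScale; fun_prop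
  have c2 : Continuous (fun y => deriv (fun y => φ (x, y)) y) :=
    hc.comp (Continuous.prodMk_right x)
  have := intervalIntegral.integral_mul_deriv_eq_deriv_mul (a := -(1/2)) (b := 1/2)
    (fun y _ => hdu y) (fun y _ => hd y) (c1.intervalIntegrable _ _) (c2.intervalIntegrable _ _)
  rw [this, z _ (by simp), z _ (by simp)]
  simp only [mul_assoc, intervalIntegral.integral_const_mul]
  field_simp
  ring

/-- **Second Block: two-scale limit of the derivative.** Under the sequence
setting, the two-scale expansion hypothesis and the weak two-scale convergence
of the derivatives to `η`, one has `η = ∂u¹/∂y` in the sense of distributions. -/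
theorem second_block_two_scale_limit_of_derivative
    (u : ℕ → ℝ → ℝ) (hu : ∀ N, ContDiff ℝ 1 (u N))
    (C : ℝ) (hC : 0 < C)
    (hbound : ∀ N : ℕ, (∫ x in Ioo (0 : ℝ) 1, (u N x) ^ 2) ≤ C ^ 2 ∧
      (∫ x in Ioo (0 : ℝ) 1, (deriv (u N) x) ^ 2) ≤ C ^ 2)
    (u0 u1 : ℝ × ℝ → ℝ)
    (hu0 : MemLp u0 2 (volume.restrict twoScaleDom))
    (hu1 : MemLp u1 2 (volume.restrict twoScaleDom))
    (hexp : ∀ v : ℝ × ℝ → ℝ, MemLp v 2 (volume.restrict twoScaleDom) →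
      Tendsto (fun N : ℕ => (N : ℝ) *
          ∫ p in twoScaleDom,
            (twoScale N (u N) p.1 p.2 - u0 p - (1 / (N : ℝ)) * u1 p) * v p)
        atTop (nhds 0))
    (η : ℝ × ℝ → ℝ) (hη : MemLp η 2 (volume.restrict twoScaleDom))
    (hweak : ∀ v : ℝ × ℝ → ℝ, MemLp v 2 (volume.restrict twoScaleDom) →
      Tendsto (fun N : ℕ =>
          ∫ p in twoScaleDom, twoScale N (deriv (u N)) p.1 p.2 * v p)
        atTop (nhds (∫ p in twoScaleDom, η p * v p))) :
    ∀ φ : ℝ × ℝ → ℝ, ContDiff ℝ (⊤ : ℕ∞) φ → HasCompactSupport φ →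
      tsupport φ ⊆ twoScaleDom →
      ∫ p in twoScaleDom, η p * φ p
        = -∫ p in twoScaleDom, u1 p * deriv (fun y => φ (p.1, y)) p.2 := by
  intro φ hφ _ hs
  have hc : Continuous (fun p : ℝ × ℝ => deriv (fun y => φ (p.1, y)) p.2) := by
    have e : (fun p : ℝ × ℝ => deriv (fun y => φ (p.1, y)) p.2)
        = fun p => fderiv ℝ φ p (0, 1) := by
      ext ⟨x, y⟩
      have h1 : HasFDerivAt φ (fderiv ℝ φ (x, y)) (x, y) :=
        (hφ.differentiable (by simp) (x, y)).hasFDerivAt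
      have h2 : HasDerivAt (fun y : ℝ => (x, y)) ((0 : ℝ), (1 : ℝ)) y :=
        (hasDerivAt_const y x).prodMk (hasDerivAt_id y)
      exact (h1.comp_hasDerivAt y h2).deriv
    rw [e]
    exact (hφ.continuous_fderiv (by simp)).clm_apply continuous_const
  set ψ : ℝ × ℝ → ℝ := fun p => deriv (fun y => φ (p.1, y)) p.2 with hψ
  have mψ := cont_memLp ψ hc
  have i0 : Integrable (fun p => u0 p * ψ p) (volume.restrict twoScaleDom) :=
    hu0.integrable_mul mψ
  have i1 : Integrable (fun p => u1 p * ψ p) (volume.restrict twoScaleDom) :=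
    hu1.integrable_mul mψ
  have key : ∀ N : ℕ, 0 < N →
      (N : ℝ) * (∫ p in twoScaleDom,
        (twoScale N (u N) p.1 p.2 - u0 p - (1 / (N : ℝ)) * u1 p) * ψ p)
      + (∫ p in twoScaleDom, twoScale N (deriv (u N)) p.1 p.2 * φ p)
      = -((N : ℝ) * ∫ p in twoScaleDom, u0 p * ψ p) - ∫ p in twoScaleDom, u1 p * ψ p := by
    intro N hN
    have hN' : (N : ℝ) ≠ 0 := by positivity
    have iT : Integrable (fun p : ℝ × ℝ => twoScale N (u N) p.1 p.2 * ψ p)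
        (volume.restrict twoScaleDom) :=
      (ts_memLp N hN _ (hu N).continuous).integrable_mul mψ
    rw [ts_parts N hN (u N) (hu N) φ hφ hs hc]
    have : ∀ p : ℝ × ℝ, (twoScale N (u N) p.1 p.2 - u0 p - (1 / (N : ℝ)) * u1 p) * ψ p
      = twoScale N (u N) p.1 p.2 * ψ p - u0 p * ψ p - (1 / (N : ℝ)) * (u1 p * ψ p) :=
      fun p => by ring
    simp only [this]
    have iS : Integrable (fun p : ℝ × ℝ => twoScale N (u N) p.1 p.2 * ψ p - u0 p * ψ p)
        (volume.restrict twoScaleDom) := iT.sub i0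
    change _ + -((N : ℝ) * ∫ p in twoScaleDom, twoScale N (u N) p.1 p.2 * ψ p) = _
    rw [integral_sub iS (i1.const_mul _), integral_sub iT i0, integral_const_mul]
    field_simp
    ring
  set k := ∫ p in twoScaleDom, u0 p * ψ p with hk
  have hlim := ((hexp ψ mψ).add (hweak φ (cont_memLp φ hφ.continuous))).congr'
    ((eventually_gt_atTop 0).mono key)
  have k0 : k = 0 := by
    have t := (hlim.add_const (∫ p in twoScaleDom, u1 p * ψ p)).neg.mul
      tendsto_inv_atTop_nhds_zero_nat
    rw [mul_zero] at t
    refine tendsto_nhds_unique (tendsto_const_nhds.congr' ?_) t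
    filter_upwards [eventually_gt_atTop 0] with N hN
    have hN' : (N : ℝ) ≠ 0 := by positivity
    field_simp
    ring
  rw [k0] at hlim
  simp only [mul_zero, neg_zero, zero_sub, zero_add] at hlim
  exact tendsto_nhds_unique hlim tendsto_const_nhds
end

section
/- Fourth Block (macroscopic boundary condition): under the sequence setting, the two-scale expansion hypothesis, and the weak two-scale convergence of the derivatives to η, assume additionally that u_N(0) = u_N(1) = 0 for every N and that there is a continuously differentiable ū : [0,1] → ℝ with u⁰(x,y) = ū(x) for almost every (x,y). Then ū vanishes on the boundary of the macroscopic domain: ū(0) = ū(1) = 0. -/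
open Set MeasureTheory Filter

theorem fb_pointwise (w : ℝ → ℝ) (hw : ContDiff ℝ 1 w) (K : ℝ)
    (hK : (∫ x in Ioo (0 : ℝ) 1, (deriv w x) ^ 2) ≤ K) (a : ℝ) (ha : a ∈ Icc (0 : ℝ) 1)
    (hwa : w a = 0) (t : ℝ) (ht : 0 < t) (z : ℝ) (hz : z ∈ Icc (0 : ℝ) 1) :
    |w z| ≤ t * K + |z - a| / t := by
  have hc : Continuous (deriv w) := hw.continuous_deriv (by norm_num)
  have h1 : ∫ x in a..z, deriv w x = w z - w a :=
    intervalIntegral.integral_deriv_eq_sub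
      (fun x _ => (hw.differentiable (by norm_num)) x) (hc.intervalIntegrable _ _)
  rw [hwa, sub_zero] at h1
  have hsub : uIoc a z ⊆ Icc 0 1 := by
    intro x hx
    rcases hx with ⟨h2, h3⟩
    exact ⟨(le_min ha.1 hz.1).trans h2.le, h3.trans (max_le ha.2 hz.2)⟩
  have hi2 : IntegrableOn (fun x => (deriv w x) ^ 2) (Icc 0 1) :=
    (hc.pow 2).continuousOn.integrableOn_compact isCompact_Icc
  have hi3 : IntegrableOn (fun x => t * (deriv w x) ^ 2) (uIoc a z) :=
    (hi2.mono_set hsub).const_mul t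
  have hic : IntegrableOn (fun _ : ℝ => 1 / t) (uIoc a z) := by
    exact integrableOn_const (by simp [uIoc]) (by simp)
  have h4 : ∫ x in uIoc a z, (deriv w x) ^ 2 ≤ K := by
    refine le_trans ?_ hK
    rw [← integral_Icc_eq_integral_Ioo]
    exact setIntegral_mono_set hi2 (Eventually.of_forall fun x => sq_nonneg _)
      (Eventually.of_forall hsub)
  rw [← h1]
  calc |∫ x in a..z, deriv w x| ≤ ∫ x in uIoc a z, |deriv w x| := by
        simpa using intervalIntegral.norm_integral_le_integral_norm_uIoc (f := deriv w) (a := a) (b := z) (μ := volume)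
    _ ≤ ∫ x in uIoc a z, (t * (deriv w x) ^ 2 + 1 / t) := by
        apply integral_mono
        · exact ((hc.abs).continuousOn.integrableOn_compact (isCompact_Icc (a := (0:ℝ)) (b := 1))).mono_set hsub
        · exact hi3.add hic
        · intro x
          show |deriv w x| ≤ t * (deriv w x) ^ 2 + 1 / t
          have : t * (deriv w x) ^ 2 + 1 / t - |deriv w x|
            = ((t * |deriv w x| - 1/2) ^ 2 + 3/4) / t := by
            rw [← sq_abs (deriv w x)]
            field_simp
            ring
          have h5 : 0 ≤ ((t * |deriv w x| - 1/2) ^ 2 + 3/4) / t := by positivity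
          linarith
    _ = t * (∫ x in uIoc a z, (deriv w x) ^ 2) + |z - a| / t := by
        rw [integral_add hi3 hic, integral_const_mul]
        congr 1
        simp [uIoc, Measure.real, Real.volume_Ioc, max_sub_min_eq_abs]
        ring
    _ ≤ _ := by gcongr

theorem fb_cell (N : ℕ) (hN : 0 < N) (x y : ℝ) (hx : x ∈ Ioo (0 : ℝ) 1)
    (hy : y ∈ Ioo (-(1 / 2) : ℝ) (1 / 2)) :
    ((1 / (N : ℝ)) * ((⌊x / (1 / (N : ℝ))⌋ : ℝ) + 1 / 2) + (1 / (N : ℝ)) * y) ∈ Icc (0 : ℝ) 1 ∧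
    |((1 / (N : ℝ)) * ((⌊x / (1 / (N : ℝ))⌋ : ℝ) + 1 / 2) + (1 / (N : ℝ)) * y) - x| ≤ 1 / N := by
  have hN' : (0 : ℝ) < N := by exact_mod_cast hN
  obtain ⟨k, hk⟩ : ∃ k : ℤ, k = ⌊x / (1 / (N : ℝ))⌋ := ⟨_, rfl⟩
  rw [← hk]
  have e1 : x / (1 / (N : ℝ)) = x * N := by field_simp
  rw [e1] at hk
  have k1 : (k : ℝ) ≤ x * N := by rw [hk]; exact Int.floor_le _
  have k2 : x * N < k + 1 := by rw [hk]; exact Int.lt_floor_add_one _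
  have k0 : (0 : ℝ) ≤ k := by
    have : 0 ≤ k := by rw [hk]; exact Int.floor_nonneg.2 (mul_pos hx.1 hN').le
    exact_mod_cast this
  have k3 : (k : ℝ) + 1 ≤ N := by
    have : (k : ℝ) < N := by nlinarith [hx.2]
    have : k < (N : ℤ) := by exact_mod_cast this
    exact_mod_cast this
  have e2 : (1 / (N : ℝ)) * ((k : ℝ) + 1 / 2) + (1 / (N : ℝ)) * y = (k + 1/2 + y) / N := by
    field_simp
  rw [e2]
  obtain ⟨y1, y2⟩ := hy
  refine ⟨⟨?_, ?_⟩, ?_⟩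
  · apply div_nonneg _ hN'.le; linarith
  · rw [div_le_one hN']; linarith
  · have : (k + 1/2 + y) / N - x = (k + 1/2 + y - x * N) / N := by field_simp
    rw [this, abs_div, abs_of_pos hN']
    gcongr
    rw [abs_le]; constructor <;> linarith

theorem fb_endpoint
    (u : ℕ → ℝ → ℝ) (hu : ∀ N, ContDiff ℝ 1 (u N))
    (C : ℝ) (hC : 0 < C)
    (hbound : ∀ N : ℕ, (∫ x in Ioo (0 : ℝ) 1, (deriv (u N) x) ^ 2) ≤ C ^ 2)
    (u0 u1 : ℝ × ℝ → ℝ)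
    (hu0 : MemLp u0 2 (volume.restrict twoScaleDom))
    (hu1 : MemLp u1 2 (volume.restrict twoScaleDom))
    (hexp : ∀ v : ℝ × ℝ → ℝ, MemLp v 2 (volume.restrict twoScaleDom) →
      Tendsto (fun N : ℕ => (N : ℝ) *
          ∫ p in twoScaleDom,
            (twoScale N (u N) p.1 p.2 - u0 p - (1 / (N : ℝ)) * u1 p) * v p)
        atTop (nhds 0))
    (a : ℝ) (ha : a ∈ Icc (0 : ℝ) 1)
    (hbv : ∀ N : ℕ, u N a = 0)
    (ub : ℝ → ℝ) (hub : ContDiff ℝ 1 ub)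
    (hu0eq : ∀ᵐ p ∂(volume.restrict twoScaleDom), u0 p = ub p.1) :
    ub a = 0 := by
  suffices H : ∀ e : ℝ, 0 < e → |ub a| ≤ 3 * e by
    by_contra hne
    have := abs_pos.2 hne
    have := H (|ub a| / 6) (by positivity)
    linarith
  intro e he
  obtain ⟨d1, hd1, hd1'⟩ := Metric.continuousAt_iff.1 (hub.continuous.continuousAt (x := a)) e he
  set t : ℝ := e / C ^ 2 with ht
  have htp : 0 < t := by positivity
  set d : ℝ := min d1 (t * e / 2) with hd
  have hdp : 0 < d := lt_min hd1 (by positivity)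
  set B : Set (ℝ × ℝ) := (Ioo (0 : ℝ) 1 ∩ Metric.ball a d) ×ˢ Ioo (-(1 / 2) : ℝ) (1 / 2) with hB
  have hBo : IsOpen B := (isOpen_Ioo.inter Metric.isOpen_ball).prod isOpen_Ioo
  have hBm : MeasurableSet B := hBo.measurableSet
  have hBs : B ⊆ twoScaleDom := prod_mono inter_subset_left subset_rfl
  have hBne : B.Nonempty := by
    have hcl : a ∈ closure (Ioo (0 : ℝ) 1) := by
      rw [closure_Ioo (by norm_num)]; exact ha
    obtain ⟨x, hx, hxd⟩ := Metric.mem_closure_iff.1 hcl d hdp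
    exact ⟨(x, 0), ⟨hx, by rw [Metric.mem_ball, dist_comm]; exact hxd⟩, by norm_num⟩
  have hDfin : volume twoScaleDom < ⊤ := by
    unfold twoScaleDom
    rw [Measure.volume_eq_prod, Measure.prod_prod]
    simp [Real.volume_Ioo]
  have hBfin : volume B < ⊤ := (measure_mono hBs).trans_lt hDfin
  have hm : 0 < volume.real B :=
    ENNReal.toReal_pos (hBo.measure_pos volume hBne).ne' hBfin.ne
  have : IsFiniteMeasure (volume.restrict twoScaleDom) := ⟨by simpa using hDfin⟩
  have : IsFiniteMeasure (volume.restrict B) := ⟨by simpa using hBfin⟩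
  have i0 : IntegrableOn u0 B := (hu0.integrable (by norm_num)).mono_measure
    (Measure.restrict_mono hBs le_rfl)
  have i1 : IntegrableOn u1 B := (hu1.integrable (by norm_num)).mono_measure
    (Measure.restrict_mono hBs le_rfl)
  have hq : ∀ᵐ p ∂(volume.restrict B), u0 p = ub p.1 :=
    ae_mono (Measure.restrict_mono hBs le_rfl) hu0eq
  have hlim := hexp (B.indicator fun _ => 1)
    ((memLp_const (1 : ℝ)).indicator hBm)
  have hint : ∀ N : ℕ, (∫ p in twoScaleDom,
            (twoScale N (u N) p.1 p.2 - u0 p - (1 / (N : ℝ)) * u1 p) * B.indicator (fun _ => 1) p)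
      = ∫ p in B, (twoScale N (u N) p.1 p.2 - u0 p - (1 / (N : ℝ)) * u1 p) := by
    intro N
    have : ∀ p, (twoScale N (u N) p.1 p.2 - u0 p - (1 / (N : ℝ)) * u1 p) * B.indicator (fun _ => 1) p
      = B.indicator (fun p => twoScale N (u N) p.1 p.2 - u0 p - (1 / (N : ℝ)) * u1 p) p := by
      intro p
      by_cases hp : p ∈ B <;> simp [hp]
    simp_rw [this]
    rw [setIntegral_indicator hBm, inter_eq_self_of_subset_right hBs]
  simp_rw [hint] at hlim
  have hinv : Tendsto (fun N : ℕ => 1 / (N : ℝ)) atTop (nhds 0) := tendsto_one_div_atTop_nhds_zero_nat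
  have hlim2 : Tendsto (fun N : ℕ => |(1 / (N : ℝ)) * ((N : ℝ) *
      ∫ p in B, (twoScale N (u N) p.1 p.2 - u0 p - (1 / (N : ℝ)) * u1 p))
      + (1 / (N : ℝ)) * ∫ p in B, u1 p|) atTop (nhds 0) := by
    have := ((hinv.mul hlim).add (hinv.mul_const (∫ p in B, u1 p))).abs
    simpa using this
  have key : ∀ N : ℕ, 0 < N → 1 / (N : ℝ) < t * e / 2 →
      |ub a| * volume.real B ≤ 3 * e * volume.real B + |(1 / (N : ℝ)) * ((N : ℝ) *
      ∫ p in B, (twoScale N (u N) p.1 p.2 - u0 p - (1 / (N : ℝ)) * u1 p))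
      + (1 / (N : ℝ)) * ∫ p in B, u1 p| := by
    intro N hN hNe
    have hN' : (0 : ℝ) < N := by exact_mod_cast hN
    have hT : ∀ p ∈ B, |twoScale N (u N) p.1 p.2| ≤ 2 * e := by
      rintro ⟨x, y⟩ ⟨⟨hx, hxa⟩, hy⟩
      obtain ⟨hz, hzx⟩ := fb_cell N hN x y hx hy
      have h := fb_pointwise (u N) (hu N) (C ^ 2) (hbound N) a ha (hbv N) t htp _ hz
      unfold twoScale
      refine h.trans ?_
      have h2 : t * C ^ 2 = e := by rw [ht]; field_simp
      rw [h2]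
      have h3 : |x - a| < t * e / 2 := by
        rw [Metric.mem_ball, Real.dist_eq] at hxa
        exact hxa.trans_le (min_le_right _ _)
      have h4 := abs_sub_le ((1 / (N : ℝ)) * ((⌊x / (1 / (N : ℝ))⌋ : ℝ) + 1 / 2) + (1 / (N : ℝ)) * y) x a
      have h5 : |((1 / (N : ℝ)) * ((⌊x / (1 / (N : ℝ))⌋ : ℝ) + 1 / 2) + (1 / (N : ℝ)) * y) - a| / t ≤ e := by
        rw [div_le_iff₀ htp]; linarith
      linarith
    have hTm : Measurable fun p : ℝ × ℝ => twoScale N (u N) p.1 p.2 := by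
      unfold twoScale
      apply (hu N).continuous.measurable.comp
      have : Measurable fun p : ℝ × ℝ => (⌊p.1 / (1 / (N : ℝ))⌋ : ℝ) :=
        (measurable_from_top (f := fun k : ℤ => (k : ℝ))).comp
          (Int.measurable_floor.comp (measurable_fst.div_const _))
      fun_prop
    have iT : IntegrableOn (fun p : ℝ × ℝ => twoScale N (u N) p.1 p.2) B := by
      refine Integrable.of_bound hTm.aestronglyMeasurable (2 * e) ?_
      exact (ae_restrict_iff' hBm).2 (Eventually.of_forall fun p hp => by simpa using hT p hp)
    have hb : |∫ p in B, (ub a - u0 p + twoScale N (u N) p.1 p.2)| ≤ 3 * e * volume.real B := by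
      have := norm_setIntegral_le_of_norm_le_const_ae (μ := volume) (s := B) (C := 3 * e)
        (f := fun p => ub a - u0 p + twoScale N (u N) p.1 p.2) hBfin ?_
      · simpa using this
      · filter_upwards [hq, ae_restrict_mem hBm] with p hp hpB
        rw [hp]
        have h1 := hT p hpB
        have h2 : |ub p.1 - ub a| < e := by
          have := hpB.1.2
          rw [Metric.mem_ball] at this
          have := hd1' (this.trans_le (min_le_left _ _))
          rwa [Real.dist_eq] at this
        rw [Real.norm_eq_abs]
        rw [abs_le] at *
        rw [abs_lt] at h2
        constructor <;> linarith
    have ic : IntegrableOn (fun _ : ℝ × ℝ => ub a) B := integrable_const _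
    have e1 : ∫ p in B, (ub a - u0 p + twoScale N (u N) p.1 p.2) =
        ub a * volume.real B - (∫ p in B, u0 p) + ∫ p in B, twoScale N (u N) p.1 p.2 := by
      have i2 : IntegrableOn (fun p => ub a - u0 p) B := ic.sub i0
      rw [integral_add i2 iT, integral_sub ic i0, setIntegral_const, smul_eq_mul, mul_comm]
    have e2 : ∫ p in B, (twoScale N (u N) p.1 p.2 - u0 p - (1 / (N : ℝ)) * u1 p) =
        (∫ p in B, twoScale N (u N) p.1 p.2) - (∫ p in B, u0 p) - (1 / (N : ℝ)) * ∫ p in B, u1 p := by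
      have i2 : IntegrableOn (fun p => twoScale N (u N) p.1 p.2 - u0 p) B := iT.sub i0
      rw [integral_sub i2 (i1.const_mul _), integral_sub iT i0, integral_const_mul]
    have e3 : (1 / (N : ℝ)) * ((N : ℝ) *
      ∫ p in B, (twoScale N (u N) p.1 p.2 - u0 p - (1 / (N : ℝ)) * u1 p))
      + (1 / (N : ℝ)) * ∫ p in B, u1 p
      = (∫ p in B, twoScale N (u N) p.1 p.2) - (∫ p in B, u0 p) := by
      rw [← mul_assoc, one_div_mul_cancel hN'.ne', one_mul, e2]; ring
    rw [e3]
    rw [e1] at hb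
    have e4 : |ub a| * volume.real B = |ub a * volume.real B| := by
      rw [abs_mul, abs_of_pos hm]
    rw [e4]
    have e5 : ub a * volume.real B = (ub a * volume.real B - (∫ p in B, u0 p) + ∫ p in B, twoScale N (u N) p.1 p.2)
      - ((∫ p in B, twoScale N (u N) p.1 p.2) - (∫ p in B, u0 p)) := by ring
    have e6 := abs_sub (ub a * volume.real B - (∫ p in B, u0 p) + ∫ p in B, twoScale N (u N) p.1 p.2)
      ((∫ p in B, twoScale N (u N) p.1 p.2) - (∫ p in B, u0 p))
    rw [← e5] at e6
    linarith
  have hfin : |ub a| * volume.real B ≤ 3 * e * volume.real B + 0 := by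
    refine ge_of_tendsto (hlim2.const_add _) ?_
    filter_upwards [eventually_gt_atTop 0, hinv.eventually_lt_const (show 0 < t * e / 2 by positivity)]
      with N h1 h2
    exact key N h1 h2
  rw [add_zero] at hfin
  exact le_of_mul_le_mul_right hfin hm

/-- **Fourth Block: macroscopic boundary condition.** Under the sequence
setting, if moreover `u_N(0) = u_N(1) = 0` for every `N` and `u⁰(x,y) = ū(x)`
a.e. with `ū` continuously differentiable, then `ū(0) = ū(1) = 0`. -/
theorem fourth_block_macroscopic_boundary_condition
    (u : ℕ → ℝ → ℝ) (hu : ∀ N, ContDiff ℝ 1 (u N))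
    (C : ℝ) (hC : 0 < C)
    (hbound : ∀ N : ℕ, (∫ x in Ioo (0 : ℝ) 1, (u N x) ^ 2) ≤ C ^ 2 ∧
      (∫ x in Ioo (0 : ℝ) 1, (deriv (u N) x) ^ 2) ≤ C ^ 2)
    (u0 u1 : ℝ × ℝ → ℝ)
    (hu0 : MemLp u0 2 (volume.restrict twoScaleDom))
    (hu1 : MemLp u1 2 (volume.restrict twoScaleDom))
    (hexp : ∀ v : ℝ × ℝ → ℝ, MemLp v 2 (volume.restrict twoScaleDom) →
      Tendsto (fun N : ℕ => (N : ℝ) *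
          ∫ p in twoScaleDom,
            (twoScale N (u N) p.1 p.2 - u0 p - (1 / (N : ℝ)) * u1 p) * v p)
        atTop (nhds 0))
    (η : ℝ × ℝ → ℝ) (hη : MemLp η 2 (volume.restrict twoScaleDom))
    (hweak : ∀ v : ℝ × ℝ → ℝ, MemLp v 2 (volume.restrict twoScaleDom) →
      Tendsto (fun N : ℕ =>
          ∫ p in twoScaleDom, twoScale N (deriv (u N)) p.1 p.2 * v p)
        atTop (nhds (∫ p in twoScaleDom, η p * v p)))
    (hbv : ∀ N : ℕ, u N 0 = 0 ∧ u N 1 = 0)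
    (ub : ℝ → ℝ) (hub : ContDiff ℝ 1 ub)
    (hu0eq : ∀ᵐ p ∂(volume.restrict twoScaleDom), u0 p = ub p.1) :
    ub 0 = 0 ∧ ub 1 = 0 := by
  exact ⟨fb_endpoint u hu C hC (fun N => (hbound N).2) u0 u1 hu0 hu1 hexp 0 (by norm_num)
      (fun N => (hbv N).1) ub hub hu0eq,
    fb_endpoint u hu C hC (fun N => (hbound N).2) u0 u1 hu0 hu1 hexp 1 (by norm_num)
      (fun N => (hbv N).2) ub hub hu0eq⟩
end

section
/- Fifth Block (two-scale model): let a⁰ : ℝ → ℝ be continuous and 1-periodic with 0 < α ≤ a⁰(y) ≤ β for all y, and set a_N(x) = a⁰(x/ε − 1/2) (so that T_N a_N(x,y) = a⁰(y)). Let f ∈ L²(0,1) and f⁰ ∈ L²((0,1) × (−1/2,1/2)) be such that ∫∫ (T_N f) v dx dy → ∫∫ f⁰ v dx dy for every v ∈ L²((0,1) × (−1/2,1/2)). Assume that for each N, u_N(0) = u_N(1) = 0 and u_N satisfies the weak formulation ∫₀¹ a_N u_N' v' dx = ∫₀¹ f v dx for every continuously differentiable v : [0,1] → ℝ with v(0)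 = v(1) = 0. Assume further the sequence setting, the two-scale expansion hypothesis, the weak two-scale convergence of the derivatives to η, and that there are a continuously differentiable ū : [0,1] → ℝ and w ∈ L²((0,1) × (−1/2,1/2)) with u⁰(x,y) = ū(x) and η(x,y) = ū'(x) + w(x,y) for almost every (x,y). Then the pair (ū, w) solves the two-scale weak formulation: for every infinitely differentiable v⁰ : ℝ → ℝ with compact support in (0,1) and every infinitely differentiable v¹ : ℝ × ℝ → ℝ that is 1-periodic in its second argument and vanishes whenever its first argument lies outside claims a compact subset of (0,1), ∫∫_{(0,1)×(−1/2,1/2)} a⁰(y) (ū'(x) + w(x,y)) ((v⁰)'(x) + (∂v¹/∂y)(x,y)) dx dy = ∫∫_{(0,1)×(−1/2,1/2)} f⁰(x,y) v⁰(x) dx dy. -/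
open Set MeasureTheory Filter

noncomputable def tsPhi (N : ℕ) (p : ℝ × ℝ) : ℝ :=
  (1 / (N : ℝ)) * ((⌊p.1 / (1 / (N : ℝ))⌋ : ℝ) + 1 / 2) + (1 / (N : ℝ)) * p.2

lemma twoScale_eq_tsPhi (N : ℕ) (u : ℝ → ℝ) (p : ℝ × ℝ) :
    twoScale N u p.1 p.2 = u (tsPhi N p) := rfl

lemma tsPhi_measurable (N : ℕ) : Measurable (tsPhi N) := by
  unfold tsPhi
  have h1 : Measurable (fun p : ℝ × ℝ => (⌊p.1 / (1 / (N : ℝ))⌋ : ℝ)) := by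
    have : Measurable (fun p : ℝ × ℝ => ⌊p.1 / (1 / (N : ℝ))⌋) := by fun_prop
    exact (measurable_from_top (f := fun z : ℤ => (z : ℝ))).comp this
  fun_prop

lemma lint_cells (N : ℕ) (hN : 0 < N) (h : ℝ → ENNReal) (n : ℕ) :
    ∫⁻ x in Ico (0 : ℝ) (n / N), h x
      = ∑ k ∈ Finset.range n, ∫⁻ x in Ico ((k : ℝ) / N) ((k + 1 : ℝ) / N), h x := by
  have hN' : (0 : ℝ) < N := by exact_mod_cast hN
  induction n with
  | zero => simp
  | succ n ih =>
    rw [Finset.sum_range_succ, ← ih, ← lintegral_union measurableSet_Ico]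
    · rw [Ico_union_Ico_eq_Ico]
      · push_cast; rfl
      · positivity
      · gcongr; linarith
    · rw [Set.disjoint_left]
      intro x hx hx'
      exact absurd hx.2 (not_lt.mpr hx'.1)

lemma cell_cov (N : ℕ) (hN : 0 < N) (k : ℕ) (g : ℝ → ENNReal) :
    ∫⁻ x in Ico ((k : ℝ) / N) ((k + 1 : ℝ) / N), g x
      = ENNReal.ofReal (1 / (N : ℝ)) * ∫⁻ y in Ico (-(1 / 2) : ℝ) (1 / 2),
        g ((1 / (N : ℝ)) * ((k : ℝ) + 1 / 2) + (1 / (N : ℝ)) * y) := by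
  have hN' : (0 : ℝ) < N := by exact_mod_cast hN
  have him : (fun y : ℝ => (1 / (N : ℝ)) * ((k : ℝ) + 1 / 2) + (1 / (N : ℝ)) * y) ''
      Ico (-(1 / 2) : ℝ) (1 / 2) = Ico ((k : ℝ) / N) ((k + 1 : ℝ) / N) := by
    ext x
    simp only [mem_image, mem_Ico]
    constructor
    · rintro ⟨y, ⟨h1, h2⟩, rfl⟩
      rw [div_le_iff₀ hN', lt_div_iff₀ hN']
      have : (1 / (N : ℝ) * (k + 1 / 2) + 1 / N * y) * N = k + 1 / 2 + y := by field_simp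
      rw [this]; constructor <;> linarith
    · rintro ⟨h1, h2⟩
      rw [div_le_iff₀ hN'] at h1
      rw [lt_div_iff₀ hN'] at h2
      refine ⟨x * N - k - 1 / 2, ⟨by linarith, by linarith⟩, ?_⟩
      field_simp; ring
  rw [← him, lintegral_image_eq_lintegral_abs_deriv_mul measurableSet_Ico
    (f' := fun _ => 1 / (N : ℝ))]
  · rw [abs_of_pos (by positivity), lintegral_const_mul' _ _ ENNReal.ofReal_ne_top]
  · intro x _
    have := ((hasDerivAt_id x).const_mul (1 / (N : ℝ))).const_add
      ((1 / (N : ℝ)) * ((k : ℝ) + 1 / 2))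
    simpa using this.hasDerivWithinAt
  · intro x _ y _ hxy
    have h2 : (1 / (N : ℝ)) * x = (1 / (N : ℝ)) * y := by simpa using hxy
    exact mul_left_cancel₀ (by positivity) h2

lemma floor_cell (N : ℕ) (hN : 0 < N) (k : ℕ) (x : ℝ)
    (hx : x ∈ Ico ((k : ℝ) / N) ((k + 1 : ℝ) / N)) : (⌊x / (1 / (N : ℝ))⌋ : ℝ) = k := by
  have hN' : (0 : ℝ) < N := by exact_mod_cast hN
  have h1 := hx.1
  have h2 := hx.2
  rw [div_le_iff₀ hN'] at h1
  rw [lt_div_iff₀ hN'] at h2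
  have : ⌊x / (1 / (N : ℝ))⌋ = (k : ℤ) := by
    rw [Int.floor_eq_iff]
    simp only [div_div_eq_mul_div, div_one, Int.cast_natCast]
    exact ⟨h1, h2⟩
  rw [this]; simp

lemma tsPhi_mp (N : ℕ) (hN : 0 < N) :
    MeasurePreserving (tsPhi N) (volume.restrict twoScaleDom)
      (volume.restrict (Ioo (0 : ℝ) 1)) := by
  have hN' : (0 : ℝ) < N := by exact_mod_cast hN
  refine ⟨tsPhi_measurable N, ?_⟩
  refine Measure.ext_of_lintegral _ fun g hg => ?_
  rw [lintegral_map hg (tsPhi_measurable N)]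
  have hdom : (volume : Measure (ℝ × ℝ)).restrict twoScaleDom
      = (volume.restrict (Ico (0 : ℝ) 1)).prod
        (volume.restrict (Ico (-(1 / 2) : ℝ) (1 / 2))) := by
    rw [twoScaleDom, Measure.volume_eq_prod, ← Measure.prod_restrict,
      restrict_Ioo_eq_restrict_Ico, restrict_Ioo_eq_restrict_Ico]
  rw [hdom, lintegral_prod (fun z => g (tsPhi N z)) (hg.comp (tsPhi_measurable N)).aemeasurable,
    restrict_Ioo_eq_restrict_Ico]
  have h1 : Ico (0 : ℝ) 1 = Ico (0 : ℝ) ((N : ℝ) / N) := by rw [div_self hN'.ne']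
  rw [h1, lint_cells N hN, lint_cells N hN]
  refine Finset.sum_congr rfl fun k _ => ?_
  rw [cell_cov N hN k g]
  rw [setLIntegral_congr_fun (g := fun _ => ∫⁻ y in Ico (-(1 / 2) : ℝ) (1 / 2),
        g ((1 / (N : ℝ)) * ((k : ℝ) + 1 / 2) + (1 / (N : ℝ)) * y)) measurableSet_Ico]
  · rw [setLIntegral_const, mul_comm, Real.volume_Ico]
    congr 2; field_simp; ring
  · intro x hx
    simp only [tsPhi, floor_cell N hN k x hx]

lemma tsPhi_close (N : ℕ) (hN : 0 < N) (p : ℝ × ℝ) (hp : p ∈ twoScaleDom) :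
    tsPhi N p ∈ Icc (0 : ℝ) 1 ∧ |tsPhi N p - p.1| ≤ 1 / N := by
  have hN' : (0 : ℝ) < N := by exact_mod_cast hN
  obtain ⟨⟨hx0, hx1⟩, hy0, hy1⟩ := hp
  have e : p.1 / (1 / (N : ℝ)) = p.1 * N := by simp
  have key : tsPhi N p = ((⌊p.1 * N⌋ : ℝ) + 1 / 2 + p.2) / N := by
    unfold tsPhi; rw [e]; field_simp
  have f1 := Int.floor_le (p.1 * N)
  have f2 := Int.lt_floor_add_one (p.1 * N)
  have f3 : (0 : ℝ) ≤ ⌊p.1 * N⌋ := by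
    exact_mod_cast Int.floor_nonneg.mpr (by positivity)
  have f4 : (⌊p.1 * N⌋ : ℝ) + 1 ≤ N := by
    have : ⌊p.1 * N⌋ < (N : ℤ) := by
      rw [Int.floor_lt]; push_cast; nlinarith
    exact_mod_cast this
  have hp1 : p.1 = (p.1 * N) / N := by field_simp
  rw [key]
  refine ⟨⟨?_, ?_⟩, ?_⟩
  · apply div_nonneg _ hN'.le; linarith
  · rw [div_le_one hN']; linarith
  · rw [hp1, ← sub_div, ← hp1, abs_div, abs_of_pos hN']
    gcongr
    rw [abs_le]; constructor <;> linarith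

lemma per_tsPhi (N : ℕ) (hN : 0 < N) (F : ℝ × ℝ → ℝ)
    (hper : ∀ x y, F (x, y + 1) = F (x, y)) (p : ℝ × ℝ) :
    F (tsPhi N p, tsPhi N p / (1 / (N : ℝ)) - 1 / 2) = F (tsPhi N p, p.2) := by
  have hN' : (0 : ℝ) < N := by exact_mod_cast hN
  have e : tsPhi N p / (1 / (N : ℝ)) - 1 / 2 = p.2 + (⌊p.1 / (1 / (N : ℝ))⌋ : ℤ) * 1 := by
    unfold tsPhi; generalize (⌊p.1 / (1 / (N : ℝ))⌋ : ℤ) = z; field_simp; ring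
  have hP : Function.Periodic (fun y => F (tsPhi N p, y)) 1 := fun y => hper _ y
  rw [e]
  exact hP.int_mul _ _

instance dom_fin_s16 : IsFiniteMeasure ((volume : Measure (ℝ × ℝ)).restrict twoScaleDom) := by
  constructor
  rw [Measure.restrict_apply_univ, twoScaleDom, Measure.volume_eq_prod, Measure.prod_prod]
  exact ENNReal.mul_lt_top (by simp) (by simp [Real.volume_Ioo])

lemma cont_bdd_s16 (F : ℝ × ℝ → ℝ) (hF : Continuous F) :
    ∃ B, 0 ≤ B ∧ ∀ p ∈ Icc (0 : ℝ) 1 ×ˢ Icc (-(1 / 2) : ℝ) (1 / 2), |F p| ≤ B := by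
  obtain ⟨B, hB⟩ := (isCompact_Icc.prod isCompact_Icc :
    IsCompact (Icc (0 : ℝ) 1 ×ˢ Icc (-(1 / 2) : ℝ) (1 / 2))).exists_bound_of_continuousOn
      hF.continuousOn
  exact ⟨max B 0, le_max_right _ _, fun p hp => (hB p hp).trans (le_max_left _ _)⟩

lemma dom_sub : twoScaleDom ⊆ Icc (0 : ℝ) 1 ×ˢ Icc (-(1 / 2) : ℝ) (1 / 2) :=
  prod_mono Ioo_subset_Icc_self Ioo_subset_Icc_self

lemma cont_memLp_s16 (F : ℝ × ℝ → ℝ) (hF : Continuous F) :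
    MemLp F 2 ((volume : Measure (ℝ × ℝ)).restrict twoScaleDom) := by
  obtain ⟨B, _, hB⟩ := cont_bdd_s16 F hF
  refine MemLp.of_bound hF.aestronglyMeasurable B ?_
  filter_upwards [ae_restrict_mem dom_meas] with p hp using hB p (dom_sub hp)

lemma key_conv (h : ℕ → ℝ → ℝ) (hh : ∀ N, IntegrableOn (h N) (Ioo 0 1)) (M : ℝ)
    (hM : ∀ N, ∫ x in Ioo (0 : ℝ) 1, |h N x| ≤ M) (H : ℝ × ℝ → ℝ)
    (hconv : ∀ v : ℝ × ℝ → ℝ, MemLp v 2 (volume.restrict twoScaleDom) →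
      Tendsto (fun N : ℕ => ∫ p in twoScaleDom, twoScale N (h N) p.1 p.2 * v p)
        atTop (nhds (∫ p in twoScaleDom, H p * v p)))
    (F G : ℝ × ℝ → ℝ) (hF : Continuous F) (hG : Continuous G)
    (hFp : ∀ x y, F (x, y + 1) = F (x, y)) (hGp : ∀ x y, G (x, y + 1) = G (x, y)) :
    Tendsto (fun N : ℕ => ∫ x in Ioo (0 : ℝ) 1, h N x *
      (F (x, x / (1 / (N : ℝ)) - 1 / 2) + (1 / (N : ℝ)) * G (x, x / (1 / (N : ℝ)) - 1 / 2)))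
      atTop (nhds (∫ p in twoScaleDom, H p * F p)) := by
  obtain ⟨B, hB0, hB⟩ := cont_bdd_s16 G hG
  obtain ⟨BF, hBF0, hBF⟩ := cont_bdd_s16 F hF
  have hM0 : 0 ≤ M := (integral_nonneg fun _ => abs_nonneg _).trans (hM 0)
  refine tendsto_of_tendsto_of_dist (hconv F (cont_memLp_s16 F hF)) ?_
  rw [Metric.tendsto_atTop]
  intro e he
  have hUC := (isCompact_Icc.prod isCompact_Icc :
    IsCompact (Icc (0 : ℝ) 1 ×ˢ Icc (-(1 / 2) : ℝ) (1 / 2))).uniformContinuousOn_of_continuous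
      hF.continuousOn
  rw [Metric.uniformContinuousOn_iff] at hUC
  set d := e / (2 * (M + 1)) with hd
  have hdpos : 0 < d := by positivity
  obtain ⟨δ, hδ, hUC⟩ := hUC (d / 2) (by positivity)
  obtain ⟨N1, hN1⟩ := exists_nat_gt (1 / δ)
  obtain ⟨N2, hN2⟩ := exists_nat_gt (B / (d / 2))
  refine ⟨max (max N1 N2) 1, fun N hN => ?_⟩
  have hNpos : 0 < N := lt_of_lt_of_le one_pos ((le_max_right _ _).trans hN)
  have hN' : (0 : ℝ) < N := by exact_mod_cast hNpos
  have hNN1 : (N1 : ℝ) ≤ N := by exact_mod_cast ((le_max_left _ _).trans (le_max_left _ _)).trans hN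
  have hNN2 : (N2 : ℝ) ≤ N := by exact_mod_cast ((le_max_right _ _).trans (le_max_left _ _)).trans hN
  have hs1 : 1 / (N : ℝ) < δ := by
    rw [div_lt_comm₀ hN' hδ]; linarith
  have hs2 : 1 / (N : ℝ) * B ≤ d / 2 := by
    have : B < N * (d / 2) := by
      rw [← div_lt_iff₀ (by positivity)]; linarith
    rw [one_div, inv_mul_le_iff₀ hN']; exact this.le
  have mp := tsPhi_mp N hNpos
  -- rewrite the one-dimensional integral
  set b : ℝ × ℝ → ℝ := fun p => F (tsPhi N p, p.2) + (1 / (N : ℝ)) * G (tsPhi N p, p.2) with hb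
  have e1 : ∫ x in Ioo (0 : ℝ) 1, h N x *
      (F (x, x / (1 / (N : ℝ)) - 1 / 2) + (1 / (N : ℝ)) * G (x, x / (1 / (N : ℝ)) - 1 / 2))
      = ∫ p in twoScaleDom, h N (tsPhi N p) * b p := by
    rw [← mp.map_eq, integral_map mp.measurable.aemeasurable]
    · refine integral_congr_ae (Eventually.of_forall fun p => ?_)
      simp only [hb, per_tsPhi N hNpos F hFp, per_tsPhi N hNpos G hGp]
    · rw [mp.map_eq]
      refine (hh N).aestronglyMeasurable.mul (Continuous.aestronglyMeasurable ?_)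
      fun_prop
  have hint : Integrable (fun p => h N (tsPhi N p)) (volume.restrict twoScaleDom) :=
    mp.integrable_comp_of_integrable (hh N)
  have hphi := tsPhi_measurable N
  have hbm : Measurable b := by
    have : Measurable (fun p : ℝ × ℝ => (tsPhi N p, p.2)) := hphi.prodMk measurable_snd
    exact (hF.measurable.comp this).add ((hG.measurable.comp this).const_mul _)
  have hclose : ∀ p ∈ twoScaleDom, |b p - F p| ≤ d := by
    intro p hp
    obtain ⟨c1, c2⟩ := tsPhi_close N hNpos p hp
    have hp' := dom_sub hp
    have hq : (tsPhi N p, p.2) ∈ Icc (0 : ℝ) 1 ×ˢ Icc (-(1 / 2) : ℝ) (1 / 2) := ⟨c1, hp'.2⟩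
    have h1 := hUC (tsPhi N p, p.2) hq p hp' (by
      rw [Prod.dist_eq]; simp only [dist_self, Real.dist_eq]
      exact max_lt (c2.trans_lt hs1) hδ)
    rw [Real.dist_eq] at h1
    have h2 : |(1 / (N : ℝ)) * G (tsPhi N p, p.2)| ≤ d / 2 := by
      rw [abs_mul, abs_of_pos (by positivity : (0 : ℝ) < 1 / N)]
      exact (mul_le_mul_of_nonneg_left (hB _ hq) (by positivity)).trans hs2
    have : b p - F p = (F (tsPhi N p, p.2) - F p) + (1 / (N : ℝ)) * G (tsPhi N p, p.2) := by
      simp only [hb]; ring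
    rw [this]
    exact (abs_add_le _ _).trans (by linarith)
  have hcl_ae : ∀ᵐ p ∂((volume : Measure (ℝ × ℝ)).restrict twoScaleDom), |b p - F p| ≤ d := by
    filter_upwards [ae_restrict_mem dom_meas] with p hp using hclose p hp
  have iF : Integrable (fun p => h N (tsPhi N p) * F p) (volume.restrict twoScaleDom) :=
    hint.mul_bdd (c := BF) hF.aestronglyMeasurable (by
      filter_upwards [ae_restrict_mem dom_meas] with p hp using hBF p (dom_sub hp))
  have iD : Integrable (fun p => h N (tsPhi N p) * (b p - F p)) (volume.restrict twoScaleDom) :=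
    hint.mul_bdd (c := d) (hbm.sub hF.measurable).aestronglyMeasurable hcl_ae
  have ib : Integrable (fun p => h N (tsPhi N p) * b p) (volume.restrict twoScaleDom) := by
    refine (iF.add iD).congr (Eventually.of_forall fun p => ?_)
    simp only [Pi.add_apply]; ring
  have habs : ∫ p in twoScaleDom, |h N (tsPhi N p)| ≤ M := by
    have : ∫ p in twoScaleDom, |h N (tsPhi N p)| = ∫ x in Ioo (0 : ℝ) 1, |h N x| := by
      rw [← mp.map_eq, integral_map mp.measurable.aemeasurable]
      rw [mp.map_eq]
      exact (hh N).abs.aestronglyMeasurable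
    rw [this]; exact hM N
  have hfin : |∫ p in twoScaleDom, h N (tsPhi N p) * (b p - F p)| ≤ M * d := by
    calc _ ≤ ∫ p in twoScaleDom, |h N (tsPhi N p) * (b p - F p)| := abs_integral_le_integral_abs
      _ ≤ ∫ p in twoScaleDom, |h N (tsPhi N p)| * d := by
        refine integral_mono_ae iD.abs (hint.abs.mul_const d) ?_
        filter_upwards [hcl_ae] with p hp
        rw [abs_mul]
        exact mul_le_mul_of_nonneg_left hp (abs_nonneg _)
      _ = (∫ p in twoScaleDom, |h N (tsPhi N p)|) * d := integral_mul_const _ _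
      _ ≤ M * d := by gcongr
  have hlt : M * d < e := by
    rw [hd, ← mul_div_assoc, div_lt_iff₀ (by positivity)]; nlinarith
  rw [e1]
  simp only [twoScale_eq_tsPhi]
  have : ∫ p in twoScaleDom, h N (tsPhi N p) * (b p - F p)
      = (∫ p in twoScaleDom, h N (tsPhi N p) * b p)
        - ∫ p in twoScaleDom, h N (tsPhi N p) * F p := by
    rw [← integral_sub ib iF]
    refine integral_congr_ae (Eventually.of_forall fun p => ?_)
    simp only; ring
  rw [Real.dist_eq, sub_zero, abs_of_nonneg dist_nonneg, dist_comm, Real.dist_eq, ← this]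
  exact hfin.trans_lt hlt

/-- **Fifth Block: two-scale model.** Under the sequence setting with the
oscillating coefficient `a_N(x) = a⁰(x/ε − 1/2)`, the Dirichlet conditions and
the weak formulations `∫ a_N u_N' v' = ∫ f v`, the pair `(ū, w)` from the
two-scale limits solves the two-scale weak formulation
`∫∫ a⁰(y)(ū' + w)((v⁰)' + ∂v¹/∂y) = ∫∫ f⁰ v⁰`. -/
theorem fifth_block_two_scale_model
    (u : ℕ → ℝ → ℝ) (hu : ∀ N, ContDiff ℝ 1 (u N))
    (C : ℝ) (hC : 0 < C)
    (hbound : ∀ N : ℕ, (∫ x in Ioo (0 : ℝ) 1, (u N x) ^ 2) ≤ C ^ 2 ∧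
      (∫ x in Ioo (0 : ℝ) 1, (deriv (u N) x) ^ 2) ≤ C ^ 2)
    (u0 u1 : ℝ × ℝ → ℝ)
    (hu0 : MemLp u0 2 (volume.restrict twoScaleDom))
    (hu1 : MemLp u1 2 (volume.restrict twoScaleDom))
    (hexp : ∀ v : ℝ × ℝ → ℝ, MemLp v 2 (volume.restrict twoScaleDom) →
      Tendsto (fun N : ℕ => (N : ℝ) *
          ∫ p in twoScaleDom,
            (twoScale N (u N) p.1 p.2 - u0 p - (1 / (N : ℝ)) * u1 p) * v p)
        atTop (nhds 0))
    (η : ℝ × ℝ → ℝ) (hη : MemLp η 2 (volume.restrict twoScaleDom))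
    (hweakconv : ∀ v : ℝ × ℝ → ℝ, MemLp v 2 (volume.restrict twoScaleDom) →
      Tendsto (fun N : ℕ =>
          ∫ p in twoScaleDom, twoScale N (deriv (u N)) p.1 p.2 * v p)
        atTop (nhds (∫ p in twoScaleDom, η p * v p)))
    (a : ℝ → ℝ) (α β : ℝ)
    (ha : Continuous a) (haper : ∀ y, a (y + 1) = a y)
    (hα : 0 < α) (hαβ : α ≤ β) (habound : ∀ y, α ≤ a y ∧ a y ≤ β)
    (f : ℝ → ℝ) (hf : MemLp f 2 (volume.restrict (Ioo (0 : ℝ) 1)))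
    (f0 : ℝ × ℝ → ℝ) (hf0 : MemLp f0 2 (volume.restrict twoScaleDom))
    (hf0conv : ∀ v : ℝ × ℝ → ℝ, MemLp v 2 (volume.restrict twoScaleDom) →
      Tendsto (fun N : ℕ => ∫ p in twoScaleDom, twoScale N f p.1 p.2 * v p)
        atTop (nhds (∫ p in twoScaleDom, f0 p * v p)))
    (hdir : ∀ N : ℕ, u N 0 = 0 ∧ u N 1 = 0)
    (hweakform : ∀ N : ℕ, ∀ v : ℝ → ℝ, ContDiff ℝ 1 v → v 0 = 0 → v 1 = 0 →
      ∫ x in Ioo (0 : ℝ) 1,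
          a (x / (1 / (N : ℝ)) - 1 / 2) * deriv (u N) x * deriv v x
        = ∫ x in Ioo (0 : ℝ) 1, f x * v x)
    (ub : ℝ → ℝ) (hub : ContDiff ℝ 1 ub)
    (w : ℝ × ℝ → ℝ) (hw : MemLp w 2 (volume.restrict twoScaleDom))
    (hu0eq : ∀ᵐ p ∂(volume.restrict twoScaleDom),
      u0 p = ub p.1 ∧ η p = deriv ub p.1 + w p) :
    ∀ v0 : ℝ → ℝ, ContDiff ℝ (⊤ : ℕ∞) v0 → HasCompactSupport v0 →
      tsupport v0 ⊆ Ioo (0 : ℝ) 1 →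
    ∀ v1 : ℝ → ℝ → ℝ, ContDiff ℝ (⊤ : ℕ∞) (fun p : ℝ × ℝ => v1 p.1 p.2) →
      (∀ x y : ℝ, v1 x (y + 1) = v1 x y) →
      (∃ K : Set ℝ, IsCompact K ∧ K ⊆ Ioo (0 : ℝ) 1 ∧
        ∀ x ∉ K, ∀ y : ℝ, v1 x y = 0) →
      ∫ p in twoScaleDom,
          a p.2 * (deriv ub p.1 + w p)
            * (deriv v0 p.1 + deriv (fun y => v1 p.1 y) p.2)
        = ∫ p in twoScaleDom, f0 p * v0 p.1 := by
  intro v0 hv0 hv0c hv0s v1 hv1 hv1p ⟨K, hK, hKs, hv1K⟩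
  set V : ℝ × ℝ → ℝ := fun p => v1 p.1 p.2 with hV
  have hVd : Differentiable ℝ V := hv1.differentiable (by simp)
  have hfV : Continuous (fderiv ℝ V) := hv1.continuous_fderiv (by simp)
  have hdv0 : Continuous (deriv v0) := hv0.continuous_deriv (by simp)
  have hv0d : Differentiable ℝ v0 := hv0.differentiable (by simp)
  have hfVper : ∀ x y, fderiv ℝ V (x, y + 1) = fderiv ℝ V (x, y) := by
    intro x y
    have h1 := fderiv_comp_add_right (𝕜 := ℝ) (f := V) (x := (x, y)) ((0, 1) : ℝ × ℝ)
    have h2 : (fun q : ℝ × ℝ => V (q + (0, 1))) = V := by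
      funext q; simp [hV, hv1p]
    rw [h2] at h1
    rw [h1]; simp
  set F : ℝ × ℝ → ℝ := fun p => a p.2 * (deriv v0 p.1 + fderiv ℝ V p (0, 1)) with hF
  set G : ℝ × ℝ → ℝ := fun p => a p.2 * fderiv ℝ V p (1, 0) with hG
  have hFc : Continuous F := by fun_prop
  have hGc : Continuous G := by fun_prop
  have hdu : ∀ N, Continuous (deriv (u N)) := fun N => (hu N).continuous_deriv le_rfl
  have hI : ∀ g : ℝ → ℝ, Continuous g → IntegrableOn g (Ioo 0 1) := fun g hg =>
    (hg.integrableOn_Icc (a := 0) (b := 1)).mono_set Ioo_subset_Icc_self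
  have L1 := key_conv (fun N => deriv (u N)) (fun N => hI _ (hdu N)) (C ^ 2 + 1) (by
    intro N
    have h1 : ∫ x in Ioo (0 : ℝ) 1, |deriv (u N) x|
        ≤ ∫ x in Ioo (0 : ℝ) 1, ((deriv (u N) x) ^ 2 + 1) := by
      refine integral_mono (hI _ (hdu N).abs) (hI _ (((hdu N).pow 2).add continuous_const)) ?_
      intro x
      simp only
      rw [← sq_abs]; nlinarith [sq_nonneg (|deriv (u N) x| - 1), abs_nonneg (deriv (u N) x)]
    rw [integral_add (hI (fun x => (deriv (u N) x) ^ 2) ((hdu N).pow 2))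
      (hI (fun _ => (1 : ℝ)) continuous_const)] at h1
    have h2 := (hbound N).2
    have h3 : ∫ x in Ioo (0 : ℝ) 1, (1 : ℝ) = 1 := by simp
    linarith) η hweakconv F G hFc hGc
    (by intro x y; simp only [hF, hfVper, haper]) (by intro x y; simp only [hG, hfVper, haper])
  have hfi : IntegrableOn f (Ioo 0 1) := hf.integrable (by norm_num)
  have L2 := key_conv (fun _ => f) (fun _ => hfi) (∫ x in Ioo (0 : ℝ) 1, |f x|)
    (fun _ => le_rfl) f0 hf0conv (fun p => v0 p.1) V
    (hv0.continuous.comp continuous_fst) hv1.continuous (fun _ _ => rfl)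
    (fun x y => hv1p x y)
  have hEq : ∫ p in twoScaleDom, η p * F p = ∫ p in twoScaleDom, f0 p * v0 p.1 := by
    refine tendsto_nhds_unique L1 (L2.congr' ?_)
    filter_upwards [eventually_gt_atTop 0] with N hN
    have hN' : (0 : ℝ) < N := by exact_mod_cast hN
    have z0 : v0 0 = 0 := image_eq_zero_of_notMem_tsupport fun h => lt_irrefl _ (hv0s h).1
    have z1 : v0 1 = 0 := image_eq_zero_of_notMem_tsupport fun h => lt_irrefl _ (hv0s h).2
    have y0 : ∀ y, v1 0 y = 0 := hv1K 0 fun h => lt_irrefl _ (hKs h).1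
    have y1 : ∀ y, v1 1 y = 0 := hv1K 1 fun h => lt_irrefl _ (hKs h).2
    have hcd : ContDiff ℝ 1 (fun x : ℝ => v0 x + (1 / (N : ℝ)) * V (x, x / (1 / (N : ℝ)) - 1 / 2)) := by
      have a1 : ContDiff ℝ 1 v0 := hv0.of_le (by exact_mod_cast le_top)
      have a2 : ContDiff ℝ 1 V := hv1.of_le (by exact_mod_cast le_top)
      have a3 : ContDiff ℝ 1 (fun x : ℝ => (x, x / (1 / (N : ℝ)) - 1 / 2)) := by fun_prop
      exact a1.add (contDiff_const.mul (a2.comp a3))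
    have W := hweakform N _ hcd (by simp [z0, hV, y0]) (by simp [z1, hV, y1])
    rw [← W]
    refine integral_congr_ae (Eventually.of_forall fun x => ?_)
    have hc : HasDerivAt (fun x : ℝ => (x, x / (1 / (N : ℝ)) - 1 / 2)) ((1, (N : ℝ)) : ℝ × ℝ) x := by
      refine (hasDerivAt_id x).prodMk ?_
      have := ((hasDerivAt_id x).div_const (1 / (N : ℝ))).sub_const (1 / 2)
      simpa using this
    have hcomp := (hVd (x, x / (1 / (N : ℝ)) - 1 / 2)).hasFDerivAt.comp_hasDerivAt x hc
    have hD := (hv0d x).hasDerivAt.add (hcomp.const_mul (1 / (N : ℝ)))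
    have hD' : deriv (fun x : ℝ => v0 x + (1 / (N : ℝ)) * V (x, x / (1 / (N : ℝ)) - 1 / 2)) x = _ :=
      hD.deriv
    have hlin : ∀ A : ℝ × ℝ →L[ℝ] ℝ, A (1, (N : ℝ)) = A (1, 0) + N * A (0, 1) := by
      intro A
      have : ((1, (N : ℝ)) : ℝ × ℝ) = (1, 0) + (N : ℝ) • (0, 1) := by simp
      rw [this, map_add, map_smul, smul_eq_mul]
    simp only [hF, hG]
    rw [hD', hlin]
    field_simp
    ring
  rw [← hEq]
  refine integral_congr_ae ?_
  filter_upwards [hu0eq] with p hp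
  have hdy : deriv (fun y => v1 p.1 y) p.2 = fderiv ℝ V p (0, 1) := by
    have hc : HasDerivAt (fun y : ℝ => (p.1, y)) ((0, 1) : ℝ × ℝ) p.2 :=
      (hasDerivAt_const p.2 p.1).prodMk (hasDerivAt_id p.2)
    have := (hVd (p.1, p.2)).hasFDerivAt.comp_hasDerivAt p.2 hc
    exact this.deriv
  rw [hp.2, hdy]
  simp only [hF]
  ring
end

section
/- Sixth Block (microscopic problem): let f⁰ ∈ L²((0,1) × (−1/2,1/2)), let ū : [0,1] → ℝ be continuously differentiable, and let ũ¹ : [0,1] × ℝ → ℝ be continuous, 1-periodic in its second argument, with continuous partial derivative ∂ũ¹/∂y. Suppose the two-scale weak formulation holds: for every infinitely differentiable v⁰ : ℝ → ℝ with compact support in (0,1) and every infinitely differentiable v¹ : ℝ × ℝ → ℝ that is 1-periodic in its second argument and vanishes whenever its first argument lies outside a compact subset of (0,1), ∫∫_{(0,1)×(−1/2,1/2)} a⁰(y) (ū'(x) + (∂ũ¹/∂y)(x,y)) ((v⁰)'(x) + (∂v¹/∂y)(x,y)) dx dy = ∫∫ f⁰(x,y) v⁰(x) dx dy. Then for every x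 ∈ (0,1) and every y ∈ ℝ, (∂ũ¹/∂y)(x,y) = ū'(x) · (h/a⁰(y) − 1) = ū'(x) (θ¹)'(y); i.e. ũ¹ solves the microscopic problem with μ = ū'(x) and its y-derivative is ū' times that of θ¹. -/
open Set MeasureTheory Filter

lemma aux_fourier (g : ℝ → ℝ) (hg : Continuous g) (hper : ∀ y, g (y + 1) = g y)
    (hc : ∀ n : ℤ, n ≠ 0 → ∫ y in (-(1 / 2) : ℝ)..(1 / 2), g y * Real.cos (2 * Real.pi * n * y) = 0)
    (hs : ∀ n : ℤ, n ≠ 0 → ∫ y in (-(1 / 2) : ℝ)..(1 / 2), g y * Real.sin (2 * Real.pi * n * y) = 0) :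
    ∃ c : ℝ, ∀ y, g y = c := by
  have hP : Function.Periodic (fun y => (g y : ℂ)) (1 : ℝ) := fun y => by simp [hper y]
  let G : C(AddCircle (1 : ℝ), ℂ) := ⟨hP.lift, by
    refine continuous_coinduced_dom.mpr ?_
    exact Complex.continuous_ofReal.comp hg⟩
  have hG : ∀ y : ℝ, G (y : AddCircle (1 : ℝ)) = (g y : ℂ) := fun y => rfl
  have hz : ∀ n : ℤ, n ≠ 0 → fourierCoeff G n = 0 := by
    intro n hn
    rw [fourierCoeff_eq_intervalIntegral _ n (-(1 / 2))]
    have e : (-(1 / 2) : ℝ) + 1 = 1 / 2 := by norm_num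
    rw [e]
    have h1 : ∀ y : ℝ, fourier (-n) (y : AddCircle (1 : ℝ)) • G (y : AddCircle (1 : ℝ))
        = ((g y * Real.cos (2 * Real.pi * n * y) : ℝ) : ℂ)
          - Complex.I * ((g y * Real.sin (2 * Real.pi * n * y) : ℝ) : ℂ) := by
      intro y
      rw [hG, fourier_coe_apply]
      have : 2 * (Real.pi : ℂ) * Complex.I * ((-n : ℤ) : ℂ) * (y : ℂ) / ((1 : ℝ) : ℂ)
          = ((-(2 * Real.pi * n * y) : ℝ) : ℂ) * Complex.I := by
        push_cast; ring
      rw [this, Complex.exp_mul_I, ← Complex.ofReal_cos, ← Complex.ofReal_sin, Real.cos_neg,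
        Real.sin_neg, smul_eq_mul]
      push_cast; ring
    simp_rw [h1]
    rw [intervalIntegral.integral_sub, intervalIntegral.integral_const_mul,
      intervalIntegral.integral_ofReal, intervalIntegral.integral_ofReal, hc n hn, hs n hn]
    · simp
    · exact Continuous.intervalIntegrable (by fun_prop) _ _
    · exact Continuous.intervalIntegrable (by fun_prop) _ _
  have hsum : Summable (fourierCoeff G) := by
    refine summable_of_ne_finset_zero (s := {0}) ?_
    intro n hn
    exact hz n (by simpa using hn)
  have key : ∀ y : ℝ, (g y : ℂ) = fourierCoeff G 0 := by
    intro y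
    have h1 := has_pointwise_sum_fourier_series_of_summable hsum (y : AddCircle (1 : ℝ))
    have h2 := hasSum_single (f := fun i => fourierCoeff G i • fourier i (y : AddCircle (1 : ℝ))) 0
      (fun n hn => by simp [hz n hn])
    have := h1.unique h2
    rw [hG] at this
    simpa using this
  exact ⟨(fourierCoeff G 0).re, fun y => by rw [← key y]; simp⟩

lemma aux_test (G : ℝ × ℝ → ℝ) (hG : Continuous G) (ψ' : ℝ → ℝ) (hψ' : Continuous ψ')
    (h : ∀ φ : ℝ → ℝ, ContDiff ℝ (⊤ : ℕ∞) φ → HasCompactSupport φ → tsupport φ ⊆ Ioo (0 : ℝ) 1 →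
      ∫ p in twoScaleDom, G p * (φ p.1 * ψ' p.2) = 0) :
    ∀ x ∈ Ioo (0 : ℝ) 1, ∫ y in (-(1 / 2) : ℝ)..(1 / 2), G (x, y) * ψ' y = 0 := by
  have hF : Continuous fun x : ℝ => ∫ y in (-(1 / 2) : ℝ)..(1 / 2), G (x, y) * ψ' y := by
    apply intervalIntegral.continuous_parametric_intervalIntegral_of_continuous'
    simp only [Function.uncurry_def]
    fun_prop
  set F := fun x : ℝ => ∫ y in (-(1 / 2) : ℝ)..(1 / 2), G (x, y) * ψ' y with hFdef
  have hae : ∀ᵐ x ∂(volume : Measure ℝ), x ∈ Ioo (0 : ℝ) 1 → F x = 0 := by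
    refine IsOpen.ae_eq_zero_of_integral_contDiff_smul_eq_zero isOpen_Ioo
      (hF.locallyIntegrable.locallyIntegrableOn _) ?_
    intro φ hφ hφc hφs
    have h0 := h φ hφ hφc hφs
    have hφcont := hφ.continuous
    rw [twoScaleDom, Measure.volume_eq_prod, setIntegral_prod] at h0
    · have hset : ∫ x in Ioo (0 : ℝ) 1, φ x • F x = ∫ x, φ x • F x := by
        refine setIntegral_eq_integral_of_forall_compl_eq_zero ?_
        intro x hx
        rw [image_eq_zero_of_notMem_tsupport (fun hh => hx (hφs hh)), zero_smul]
      refine hset.symm.trans (Eq.trans ?_ h0)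
      · refine integral_congr_ae (Eventually.of_forall fun x => ?_)
        simp only [hFdef, smul_eq_mul]
        rw [intervalIntegral.integral_of_le (by norm_num), integral_Ioc_eq_integral_Ioo,
          ← integral_const_mul]
        refine integral_congr_ae (Eventually.of_forall fun y => ?_)
        simp only
        ring
    · have : Continuous fun p : ℝ × ℝ => G p * (φ p.1 * ψ' p.2) := by fun_prop
      exact (this.continuousOn.integrableOn_compact
        (isCompact_Icc.prod isCompact_Icc)).mono_set (prod_mono Ioo_subset_Icc_self Ioo_subset_Icc_self)
  have := Measure.eqOn_open_of_ae_eq (μ := (volume : Measure ℝ)) (U := Ioo (0 : ℝ) 1) (f := F)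
    (g := fun _ => 0) ((ae_restrict_iff' measurableSet_Ioo).2 hae) isOpen_Ioo hF.continuousOn
    continuousOn_const
  exact this

/-- **Sixth Block: microscopic problem.** If `(ū, ũ¹)` solves the two-scale
weak formulation, with `ũ¹` continuous, 1-periodic in its second argument and
with continuous `y`-partial derivative `u1y = ∂ũ¹/∂y`, then
`∂ũ¹/∂y(x,y) = ū'(x)(h/a⁰(y) − 1) = ū'(x)(θ¹)'(y)` for all `x ∈ (0,1)`, `y ∈ ℝ`. -/
theorem sixth_block_microscopic_problem (a : ℝ → ℝ) (α β : ℝ)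
    (ha : Continuous a) (haper : ∀ y, a (y + 1) = a y)
    (hα : 0 < α) (hαβ : α ≤ β) (hbound : ∀ y, α ≤ a y ∧ a y ≤ β)
    (f0 : ℝ × ℝ → ℝ) (hf0 : MemLp f0 2 (volume.restrict twoScaleDom))
    (ub : ℝ → ℝ) (hub : ContDiff ℝ 1 ub)
    (u1 : ℝ → ℝ → ℝ) (hu1c : Continuous (fun p : ℝ × ℝ => u1 p.1 p.2))
    (hu1per : ∀ x y : ℝ, u1 x (y + 1) = u1 x y)
    (u1y : ℝ → ℝ → ℝ)
    (hu1y : ∀ x y : ℝ, HasDerivAt (fun t => u1 x t) (u1y x y) y)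
    (hu1yc : Continuous (fun p : ℝ × ℝ => u1y p.1 p.2))
    (hweak : ∀ v0 : ℝ → ℝ, ContDiff ℝ (⊤ : ℕ∞) v0 → HasCompactSupport v0 →
      tsupport v0 ⊆ Ioo (0 : ℝ) 1 →
      ∀ v1 : ℝ → ℝ → ℝ, ContDiff ℝ (⊤ : ℕ∞) (fun p : ℝ × ℝ => v1 p.1 p.2) →
        (∀ x y : ℝ, v1 x (y + 1) = v1 x y) →
        (∃ K : Set ℝ, IsCompact K ∧ K ⊆ Ioo (0 : ℝ) 1 ∧
          ∀ x ∉ K, ∀ y : ℝ, v1 x y = 0) →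
        ∫ p in twoScaleDom,
            a p.2 * (deriv ub p.1 + u1y p.1 p.2)
              * (deriv v0 p.1 + deriv (fun y => v1 p.1 y) p.2)
          = ∫ p in twoScaleDom, f0 p * v0 p.1) :
    ∀ x ∈ Ioo (0 : ℝ) 1, ∀ y : ℝ,
      u1y x y = deriv ub x * (harmMean a / a y - 1) ∧
      u1y x y = deriv ub x * deriv (theta1 a) y := by
  have hd : Continuous (deriv ub) := hub.continuous_deriv le_rfl
  have hapos : ∀ y, 0 < a y := fun y => hα.trans_le (hbound y).1
  have hane : ∀ y, a y ≠ 0 := fun y => (hapos y).ne'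
  have hyper : ∀ x y, u1y x (y + 1) = u1y x y := by
    intro x y
    have h1 := (hu1y x (y + 1)).comp_add_const y 1
    simp only [hu1per] at h1
    exact h1.unique (hu1y x y)
  let G : ℝ × ℝ → ℝ := fun p => a p.2 * (deriv ub p.1 + u1y p.1 p.2)
  have hG : Continuous G := by
    have h1 : Continuous fun p : ℝ × ℝ => a p.2 := by fun_prop
    have h2 : Continuous fun p : ℝ × ℝ => deriv ub p.1 := by fun_prop
    exact h1.mul (h2.add hu1yc)
  have htest : ∀ ψ ψ' : ℝ → ℝ, ContDiff ℝ (⊤ : ℕ∞) ψ → (∀ y, ψ (y + 1) = ψ y) →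
      (∀ y, HasDerivAt ψ (ψ' y) y) → Continuous ψ' →
      ∀ x ∈ Ioo (0 : ℝ) 1, ∫ y in (-(1 / 2) : ℝ)..(1 / 2), G (x, y) * ψ' y = 0 := by
    intro ψ ψ' hψ hψp hψd hψc
    refine aux_test G hG ψ' hψc ?_
    intro φ hφ hφc hφs
    have h0 := hweak (fun _ => 0) contDiff_const HasCompactSupport.zero (by simp [tsupport])
      (fun x y => φ x * ψ y)
      ((hφ.comp contDiff_fst).mul (hψ.comp contDiff_snd))
      (fun x y => by rw [hψp])
      ⟨tsupport φ, hφc, hφs, fun x hx y => by rw [image_eq_zero_of_notMem_tsupport hx, zero_mul]⟩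
    have hdv : ∀ x y, deriv (fun y => φ x * ψ y) y = φ x * ψ' y :=
      fun x y => ((hψd y).const_mul (φ x)).deriv
    simpa [hdv, G] using h0
  have hcont : ContDiff ℝ (⊤ : ℕ∞) Real.cos := Real.contDiff_cos
  have hsint : ContDiff ℝ (⊤ : ℕ∞) Real.sin := Real.contDiff_sin
  have hlin : ∀ (n : ℤ) (y : ℝ), HasDerivAt (fun y : ℝ => 2 * Real.pi * n * y) (2 * Real.pi * n) y := by
    intro n y
    simpa using (hasDerivAt_id y).const_mul (2 * Real.pi * n)
  have hk : ∀ n : ℤ, n ≠ 0 → (2 * Real.pi * n : ℝ) ≠ 0 := by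
    intro n hn
    have : (n : ℝ) ≠ 0 := by exact_mod_cast hn
    have := Real.pi_ne_zero
    positivity
  intro x hx
  have hconst : ∃ c : ℝ, ∀ y, G (x, y) = c := by
    refine aux_fourier (fun y => G (x, y)) (by fun_prop) (fun y => by simp [G, haper, hyper]) ?_ ?_
    · intro n hn
      refine htest (fun y => Real.sin (2 * Real.pi * n * y) / (2 * Real.pi * n)) _ ?_ ?_ ?_ ?_ x hx
      · exact (hsint.comp (contDiff_const.mul contDiff_id)).div_const _
      · intro y
        rw [show 2 * Real.pi * n * (y + 1) = 2 * Real.pi * n * y + n * (2 * Real.pi) by ring,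
          Real.sin_add_int_mul_two_pi]
      · intro y
        have := ((hlin n y).sin).div_const (2 * Real.pi * n)
        rwa [mul_div_cancel_right₀ _ (hk n hn)] at this
      · fun_prop
    · intro n hn
      refine htest (fun y => -Real.cos (2 * Real.pi * n * y) / (2 * Real.pi * n)) _ ?_ ?_ ?_ ?_ x hx
      · exact (hcont.comp (contDiff_const.mul contDiff_id)).neg.div_const _
      · intro y
        rw [show 2 * Real.pi * n * (y + 1) = 2 * Real.pi * n * y + n * (2 * Real.pi) by ring,
          Real.cos_add_int_mul_two_pi]
      · intro y
        have := ((hlin n y).cos).neg.div_const (2 * Real.pi * n)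
        rw [neg_mul, neg_neg, mul_div_cancel_right₀ _ (hk n hn)] at this
        exact this
      · fun_prop
  obtain ⟨c, hc⟩ := hconst
  have hu : ∀ y, u1y x y = c * (1 / a y) - deriv ub x := by
    intro y
    have := hc y
    simp only [G] at this
    have h2 := hane y
    field_simp
    linarith
  have hinv : Continuous fun y => 1 / a y := continuous_const.div ha hane
  have hint : ∫ y in (-(1 / 2) : ℝ)..(1 / 2), u1y x y = 0 := by
    rw [intervalIntegral.integral_eq_sub_of_hasDerivAt (f := fun t => u1 x t)
      (fun y _ => hu1y x y)
      ((hu1yc.comp (Continuous.prodMk_right x)).intervalIntegrable _ _)]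
    have := hu1per x (-(1 / 2))
    rw [show (-(1 / 2) : ℝ) + 1 = 1 / 2 by norm_num] at this
    simp only [this, sub_self]
  have hIpos : 0 < ∫ y in (-(1 / 2) : ℝ)..(1 / 2), 1 / a y :=
    intervalIntegral.intervalIntegral_pos_of_pos (hinv.intervalIntegrable _ _)
      (fun y => one_div_pos.2 (hapos y)) (by norm_num)
  have hcI : c * (∫ y in (-(1 / 2) : ℝ)..(1 / 2), 1 / a y) = deriv ub x := by
    simp_rw [hu] at hint
    rw [intervalIntegral.integral_sub ((hinv.const_mul c).intervalIntegrable _ _)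
      (continuous_const.intervalIntegrable _ _), intervalIntegral.integral_const_mul,
      intervalIntegral.integral_const] at hint
    norm_num at hint ⊢
    linarith
  have hch : c = deriv ub x * harmMean a := by
    rw [harmMean, ← hcI, mul_assoc, mul_inv_cancel₀ hIpos.ne', mul_one]
  intro y
  have h1 : u1y x y = deriv ub x * (harmMean a / a y - 1) := by
    rw [hu y, hch]; ring
  have hth : deriv (theta1 a) y = harmMean a / a y - 1 := by
    have hcc : Continuous fun s => harmMean a / a s - 1 :=
      (continuous_const.div ha hane).sub continuous_const
    exact (hcc.deriv_integral _ 0 y)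
  exact ⟨h1, by rw [hth]; exact h1⟩
end
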